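/- arXiv:2205.00059 — 4 statements merged into one kernel-verified Lean document; each statement's English description precedes it below -/
import Mathlib

section
/- Let λ > 0 and β ∈ (0,1]. For every z ∈ ℂ, the Laplace transform of the fractional Poisson measure satisfies ∫_ℝ e^{zx} dπ_{λ,β}(x) = ∑_{k=0}^∞ (e^z λ)^k / k! · E_β^{(k)}(−λ) = E_β(λ(e^z − 1)). -/
/-!
The series is the Taylor expansion of the entire function `E_β` at `-λ` with increment `e^z λ`.
What has to be proved is that the weights `(λ^k / k!) E_β^{(k)}(-λ)` of the measure, which
`ENNReal.ofReal` would truncate at `0`, are nonnegative. This is Pollard's theorem that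
`x ↦ E_β(-x)` is completely monotone for `0 < β ≤ 1`.

`E_β` is the exponential generating function of `m_n = n! / Γ(βn + 1)`. Multiplying the
coefficients of such a function `f` by the moments of a bounded random variable `T ≥ 0` replaces
`f(x)` by `𝔼 f(Tx)`, which keeps all derivatives nonnegative on `(-∞, 0]`; so, starting from `exp`,
we may multiply by as many moment sequences as we like. By Euler's limit formula for the Gamma
function, `m_n` is the limit as `N → ∞` of
`N ^ ((1 - β) n) ∏_{j ≤ N} (βn + 1 + j) / (n + 1 + j)`.
The factor `(βn + a) / (n + a)` is the `n`-th moment of `U ^ (1 / a)`, where `U` is `1` with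
probability `β` and uniform on `(0, 1]` otherwise. Log-convexity of `Γ` shows both that the
approximants stay below `m_n`, which justifies the passage to the limit, and that `E_β` is entire.
-/

open MeasureTheory Finset
open scoped ENNReal NNReal

noncomputable section

/-- The complex Mittag-Leffler function `E_β(z) = ∑ zⁿ / Γ(βn+1)`. -/
def mittagLeffler (β : ℝ) (z : ℂ) : ℂ :=
  ∑' n : ℕ, z ^ n / (Complex.Gamma ((β * n + 1 : ℝ) : ℂ))

/-- The real Mittag-Leffler function `E_β(x) = ∑ xⁿ / Γ(βn+1)`. -/
def mittagLefflerR (β : ℝ) (x : ℝ) : ℝ :=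
  ∑' n : ℕ, x ^ n / Real.Gamma (β * n + 1)

/-- The fractional Poisson measure `π_{λ,β} = ∑_k (λᵏ/k!) E_β⁽ᵏ⁾(-λ) δ_k` on `ℝ`. -/
def fracPoisson (lam β : ℝ) : Measure ℝ :=
  Measure.sum fun k : ℕ =>
    ENNReal.ofReal (lam ^ k / k.factorial * iteratedDeriv k (mittagLefflerR β) (-lam)) •
      Measure.dirac (k : ℝ)

/-- The Poisson measure with rate `μ` on `ℝ`, `π_μ({k}) = (μᵏ/k!) e^{-μ}`. -/
def poissonMeasureR (μ : ℝ) : Measure ℝ :=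
  Measure.sum fun k : ℕ =>
    ENNReal.ofReal (μ ^ k / k.factorial * Real.exp (-μ)) • Measure.dirac (k : ℝ)

/-- The generalized Appell polynomials
`C_n^{λ,β}(x) = dⁿ/dzⁿ [e^{x log(1+z)} / E_β(λz)]` at `z = 0`. -/
def genAppell (lam β : ℝ) (n : ℕ) (x : ℂ) : ℂ :=
  iteratedDeriv n
    (fun z : ℂ => Complex.exp (x * Complex.log (1 + z)) / mittagLeffler β (lam * z)) 0

/-- The Appell polynomials `A_n^{λ,β}(x) = dⁿ/dzⁿ [e^{zx} / E_β(λ(eᶻ-1))]` at `z = 0`. -/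
def appell (lam β : ℝ) (n : ℕ) (x : ℂ) : ℂ :=
  iteratedDeriv n
    (fun z : ℂ => Complex.exp (z * x) / mittagLeffler β (lam * (Complex.exp z - 1))) 0

/-- Stirling numbers of the first kind, via `(log(1+z))^k = k! ∑_{n≥k} s(n,k) zⁿ/n!`. -/
def stirlingFst (n k : ℕ) : ℝ :=
  iteratedDeriv n (fun x : ℝ => (Real.log (1 + x)) ^ k) 0 / k.factorial

/-- Stirling numbers of the second kind, via `(eᶻ-1)^k = k! ∑_{n≥k} S(n,k) zⁿ/n!`. -/
def stirlingSnd (n k : ℕ) : ℝ :=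
  iteratedDeriv n (fun x : ℝ => (Real.exp x - 1) ^ k) 0 / k.factorial

/-- The `n`-th moment of the fractional Poisson measure. -/
def fpMoment (lam β : ℝ) (n : ℕ) : ℝ := ∫ x, x ^ n ∂(fracPoisson lam β)

/-- `M̃_{λ,β}(m) = m! λᵐ / Γ(mβ+1)`. -/
def tildeM (lam β : ℝ) (m : ℕ) : ℝ := m.factorial * lam ^ m / Real.Gamma (m * β + 1)

/-- The (partial exponential) Bell polynomials `B_{n,k}(x₁, …, x_{n-k+1})`. -/
def bellPoly (n k : ℕ) (x : ℕ → ℂ) : ℂ :=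
  ∑ j ∈ (Fintype.piFinset fun _ : Fin (n - k + 1) => Finset.range (n + 1)).filter
      (fun j => (∑ i, j i) = k ∧ (∑ i, (i.1 + 1) * j i) = n),
    (n.factorial : ℂ) / (∏ i, ((j i).factorial : ℂ)) *
      ∏ i, (x (i.1 + 1) / ((i.1 + 1).factorial : ℂ)) ^ j i

open Filter Topology ProbabilityTheory

section ExponentialGeneratingFunction

variable {𝕜 𝕜' : Type*} [RCLike 𝕜] [RCLike 𝕜']

/-- The exponential generating function `∑ m n xⁿ / n!` of a sequence `m`. -/
def egf (m : ℕ → 𝕜) (x : 𝕜) : 𝕜 := ∑' n : ℕ, m n * x ^ n / n.factorial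

/-- The sequences whose exponential generating function converges absolutely everywhere, that is,
the sequences of Taylor coefficients at `0` of entire functions. -/
def HasEntireEGF (m : ℕ → 𝕜) : Prop :=
  ∀ r : ℝ, 0 ≤ r → Summable fun n : ℕ => ‖m n‖ * r ^ n / n.factorial

lemma ofReal_egf (m : ℕ → ℝ) (x : ℝ) : ((egf m x : ℝ) : ℂ) = egf (fun n => (m n : ℂ)) x := by
  simp [egf, Complex.ofReal_tsum]

lemma egf_one : egf (fun _ => 1) = Real.exp := by
  ext x
  simp [egf, Real.exp_eq_exp_ℝ, NormedSpace.exp_eq_tsum_div]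

lemma succ_mul_pow_le_add_one_pow_succ {r : ℝ} (hr : 0 ≤ r) (n : ℕ) :
    (n + 1) * r ^ n ≤ (r + 1) ^ (n + 1) := by
  induction n with
  | zero => simpa using hr
  | succ n ih =>
    have hpow : r ^ (n + 1) ≤ (r + 1) ^ (n + 1) := by gcongr; linarith
    calc ((n + 1 : ℕ) + 1 : ℝ) * r ^ (n + 1) = r * ((n + 1) * r ^ n) + r ^ (n + 1) := by
          push_cast
          ring
      _ ≤ r * (r + 1) ^ (n + 1) + (r + 1) ^ (n + 1) := by gcongr
      _ = (r + 1) ^ (n + 1 + 1) := by ring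

namespace HasEntireEGF

lemma mono {m : ℕ → 𝕜} {m' : ℕ → 𝕜'} (hm : HasEntireEGF m) (h : ∀ n, ‖m' n‖ ≤ ‖m n‖) :
    HasEntireEGF m' := fun r hr =>
  (hm r hr).of_nonneg_of_le (fun n => by positivity) fun n => by gcongr; exact h n

variable {m : ℕ → 𝕜}

lemma summable (hm : HasEntireEGF m) (x : 𝕜) :
    Summable fun n : ℕ => m n * x ^ n / n.factorial :=
  .of_norm <| (hm ‖x‖ (norm_nonneg x)).congr fun n => by simp

lemma shift_one (hm : HasEntireEGF m) : HasEntireEGF fun n => m (n + 1) := by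
  intro r hr
  have hsum := (summable_nat_add_iff 1).2 (hm (r + 1) (by positivity))
  refine hsum.of_nonneg_of_le (fun n => by positivity) fun n => ?_
  calc ‖m (n + 1)‖ * r ^ n / n.factorial
      = ‖m (n + 1)‖ * ((n + 1) * r ^ n) / (n + 1).factorial := by
        rw [Nat.factorial_succ]
        push_cast
        field_simp
    _ ≤ ‖m (n + 1)‖ * (r + 1) ^ (n + 1) / (n + 1).factorial := by
        gcongr
        exact succ_mul_pow_le_add_one_pow_succ hr n

lemma shift (hm : HasEntireEGF m) (k : ℕ) : HasEntireEGF fun n => m (n + k) := by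
  induction k with
  | zero => exact hm
  | succ k ih => simpa only [add_right_comm, add_assoc] using ih.shift_one

lemma hasDerivAt_egf (hm : HasEntireEGF m) (x : 𝕜) :
    HasDerivAt (egf m) (egf (fun n => m (n + 1)) x) x := by
  have hsplit : egf m = fun y => m 0 + ∑' n : ℕ, m (n + 1) * y ^ (n + 1) / (n + 1).factorial := by
    ext y
    simp [egf, (hm.summable y).tsum_eq_zero_add]
  have hterm (n : ℕ) (y : 𝕜) : HasDerivAt (fun y => m (n + 1) * y ^ (n + 1) / (n + 1).factorial)
      (m (n + 1) * y ^ n / n.factorial) y := by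
    refine (((hasDerivAt_pow (n + 1) y).const_mul (m (n + 1))).div_const _).congr_deriv ?_
    have : (n.factorial : 𝕜) ≠ 0 := Nat.cast_ne_zero.2 n.factorial_ne_zero
    have : (n + 1 : 𝕜) ≠ 0 := n.cast_add_one_ne_zero
    rw [Nat.factorial_succ, Nat.add_sub_cancel]
    push_cast
    field_simp
  have hball : IsPreconnected (Metric.ball (0 : 𝕜) (‖x‖ + 1)) := (convex_ball 0 _).isPreconnected
  have hx : x ∈ Metric.ball 0 (‖x‖ + 1) := by simp
  have hbound (n : ℕ) (y : 𝕜) (hy : y ∈ Metric.ball 0 (‖x‖ + 1)) :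
      ‖m (n + 1) * y ^ n / n.factorial‖ ≤ ‖m (n + 1)‖ * (‖x‖ + 1) ^ n / n.factorial := by
    rw [norm_div, norm_mul, norm_pow, RCLike.norm_natCast]
    gcongr
    exact (mem_ball_zero_iff.1 hy).le
  have hsum : Summable fun n : ℕ => m (n + 1) * x ^ (n + 1) / (n + 1).factorial :=
    (summable_nat_add_iff (f := fun n => m n * x ^ n / n.factorial) 1).2 (hm.summable x)
  rw [hsplit]
  exact (hasDerivAt_tsum_of_isPreconnected (hm.shift_one _ (by positivity)) Metric.isOpen_ball
    hball (fun n y _ => hterm n y) hbound hx hsum hx).const_add (m 0)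

lemma iteratedDeriv_egf (hm : HasEntireEGF m) (k : ℕ) :
    iteratedDeriv k (egf m) = egf fun n => m (n + k) := by
  induction k with
  | zero => rfl
  | succ k ih =>
    ext x
    rw [iteratedDeriv_succ, ih, ((hm.shift k).hasDerivAt_egf x).deriv]
    simp only [add_right_comm, add_assoc]

lemma hasSum_taylor {m : ℕ → ℂ} (hm : HasEntireEGF m) (a b : ℂ) :
    HasSum (fun k : ℕ => a ^ k / k.factorial * iteratedDeriv k (egf m) b) (egf m (b + a)) := by
  have hdiff : Differentiable ℂ (egf m) := fun x => (hm.hasDerivAt_egf x).differentiableAt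
  refine (Complex.hasSum_taylorSeries_of_entire hdiff b (b + a)).congr_fun fun k => ?_
  rw [add_sub_cancel_left, smul_eq_mul, smul_eq_mul]
  ring

end HasEntireEGF

end ExponentialGeneratingFunction

section Moment

variable {Ω : Type*} [MeasurableSpace Ω] {μ : Measure Ω} [IsFiniteMeasure μ] {T : Ω → ℝ} {R : ℝ≥0}

lemma norm_moment_le (hTR : ∀ᵐ ω ∂μ, ‖T ω‖ ≤ R) (n : ℕ) : ‖moment T n μ‖ ≤ R ^ n * μ.real .univ :=
  norm_integral_le_of_norm_le_const <| hTR.mono fun ω hω => by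
    rw [Pi.pow_apply, norm_pow]
    gcongr

lemma HasEntireEGF.mul_moment {m : ℕ → ℝ} (hm : HasEntireEGF m) (hTR : ∀ᵐ ω ∂μ, ‖T ω‖ ≤ R) :
    HasEntireEGF fun n => m n * moment T n μ := by
  intro r hr
  refine ((hm (R * r) (by positivity)).mul_right (μ.real .univ)).of_nonneg_of_le
    (fun n => by positivity) fun n => ?_
  calc ‖m n * moment T n μ‖ * r ^ n / n.factorial
      ≤ ‖m n‖ * (R ^ n * μ.real .univ) * r ^ n / n.factorial := by
        rw [norm_mul]
        gcongr
        exact norm_moment_le hTR n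
    _ = ‖m n‖ * (R * r) ^ n / n.factorial * μ.real .univ := by ring

lemma HasEntireEGF.egf_shift_mul_moment {m : ℕ → ℝ} (hm : HasEntireEGF m)
    (hT : AEStronglyMeasurable T μ) (hTR : ∀ᵐ ω ∂μ, ‖T ω‖ ≤ R) (k : ℕ) (x : ℝ) :
    egf (fun n => m (n + k) * moment T (n + k) μ) x =
      ∫ ω, T ω ^ k * egf (fun n => m (n + k)) (T ω * x) ∂μ := by
  have hk := hm.shift k
  have hsum := hasSum_integral_of_dominated_convergence (μ := μ)
    (F := fun n ω => T ω ^ k * (m (n + k) * (T ω * x) ^ n / n.factorial))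
    (f := fun ω => T ω ^ k * egf (fun n => m (n + k)) (T ω * x))
    (fun n _ => R ^ k * (‖m (n + k)‖ * (R * ‖x‖) ^ n / n.factorial))
    (fun n => by fun_prop)
    (fun n => hTR.mono fun ω hω => by
      rw [norm_mul, norm_div, norm_mul, norm_pow, norm_pow, norm_mul, RCLike.norm_natCast]
      gcongr)
    (.of_forall fun _ => (hk (R * ‖x‖) (by positivity)).mul_left _)
    (integrable_const _)
    (.of_forall fun ω => (hk.summable (T ω * x)).hasSum.mul_left _)
  rw [← hsum.tsum_eq, egf]
  refine tsum_congr fun n => ?_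
  rw [moment_def, ← integral_const_mul, ← integral_mul_const, ← integral_div]
  congr 1 with ω
  rw [Pi.pow_apply]
  ring

end Moment

/-- The exponential generating function of `m` is entire and absolutely monotone on `(-∞, 0]`,
i.e. `x ↦ egf m (-x)` is completely monotone on `[0, ∞)`. The `k`-th derivative is encoded as the
generating function of the shifted sequence, see `HasEntireEGF.iteratedDeriv_egf`. -/
structure HasAbsMonotoneEGF (m : ℕ → ℝ) : Prop where
  entire : HasEntireEGF m
  egf_shift_nonneg (k : ℕ) {x : ℝ} (hx : x ≤ 0) : 0 ≤ egf (fun n => m (n + k)) x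

namespace HasAbsMonotoneEGF

lemma one : HasAbsMonotoneEGF fun _ => 1 where
  entire r _ := by simpa using Real.summable_pow_div_factorial r
  egf_shift_nonneg _ x _ := by simpa only [egf_one] using x.exp_nonneg

variable {m : ℕ → ℝ}

lemma mul_moment {Ω : Type*} [MeasurableSpace Ω] {μ : Measure Ω} [IsFiniteMeasure μ] {T : Ω → ℝ}
    {R : ℝ≥0} (hm : HasAbsMonotoneEGF m) (hT : AEStronglyMeasurable T μ)
    (hT0 : 0 ≤ᵐ[μ] T) (hTR : ∀ᵐ ω ∂μ, ‖T ω‖ ≤ R) :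
    HasAbsMonotoneEGF fun n => m n * moment T n μ where
  entire := hm.entire.mul_moment hTR
  egf_shift_nonneg k x hx := by
    rw [hm.entire.egf_shift_mul_moment hT hTR]
    refine integral_nonneg_of_ae (hT0.mono fun ω hω => ?_)
    exact mul_nonneg (pow_nonneg hω k)
      (hm.egf_shift_nonneg k (mul_nonpos_of_nonneg_of_nonpos hω hx))

lemma mul_pow (hm : HasAbsMonotoneEGF m) {c : ℝ} (hc : 0 ≤ c) :
    HasAbsMonotoneEGF fun n => m n * c ^ n := by
  lift c to ℝ≥0 using hc
  simpa [moment_def] using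
    hm.mul_moment (μ := Measure.dirac ()) (T := fun _ => (c : ℝ)) (R := c) (by fun_prop)
      (.of_forall fun _ => c.2) (.of_forall fun _ => by simp)

lemma of_tendsto {ι : Type*} {l : Filter ι} [l.NeBot] {a : ι → ℕ → ℝ} {b : ℕ → ℝ}
    (ha : ∀ᶠ i in l, HasAbsMonotoneEGF (a i)) (hb : HasEntireEGF b)
    (hab : ∀ᶠ i in l, ∀ n, ‖a i n‖ ≤ ‖b n‖) (hlim : ∀ n, Tendsto (a · n) l (𝓝 (m n))) :
    HasAbsMonotoneEGF m where
  entire := hb.mono fun n => le_of_tendsto (hlim n).norm (hab.mono fun _ hi => hi n)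
  egf_shift_nonneg k x hx := by
    refine ge_of_tendsto (tendsto_tsum_of_dominated_convergence
      (f := fun i n => a i (n + k) * x ^ n / n.factorial)
      (hb.shift k ‖x‖ (norm_nonneg x)) (fun n => ?_) (hab.mono fun i hi n => ?_))
      (ha.mono fun i hi => hi.egf_shift_nonneg k hx)
    · exact ((hlim (n + k)).mul_const _).div_const _
    · rw [norm_div, norm_mul, norm_pow, RCLike.norm_natCast]
      gcongr
      exact hi (n + k)

end HasAbsMonotoneEGF

section Mixture

lemma integral_rpow_inv_pow {a : ℝ} (ha : 0 < a) (n : ℕ) :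
    ∫ u in (0 : ℝ)..1, (u ^ a⁻¹) ^ n = a / (n + a) := by
  have hexp : 0 ≤ a⁻¹ * n := by positivity
  calc ∫ u in (0 : ℝ)..1, (u ^ a⁻¹) ^ n = ∫ u in (0 : ℝ)..1, u ^ (a⁻¹ * n) := by
        refine intervalIntegral.integral_congr fun u hu => ?_
        rw [Set.uIcc_of_le zero_le_one] at hu
        exact (Real.rpow_mul_natCast hu.1 _ _).symm
    _ = 1 / (a⁻¹ * n + 1) := by
        rw [integral_rpow (.inl (by linarith)), Real.one_rpow,
          Real.zero_rpow (by positivity), sub_zero]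
    _ = a / (n + a) := by field_simp

/-- The mixture of the point mass at `1`, with weight `β`, and the uniform distribution on `(0, 1]`,
with weight `1 - β`. -/
def diracUniformMixture (β : ℝ) : Measure ℝ :=
  ENNReal.ofReal β • Measure.dirac 1 + ENNReal.ofReal (1 - β) • volume.restrict (Set.Ioc 0 1)

instance (β : ℝ) : IsFiniteMeasure (diracUniformMixture β) := by
  have := (Measure.dirac (1 : ℝ)).smul_finite (c := ENNReal.ofReal β) ENNReal.ofReal_ne_top
  have := (volume.restrict (Set.Ioc (0 : ℝ) 1)).smul_finite (c := ENNReal.ofReal (1 - β))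
    ENNReal.ofReal_ne_top
  unfold diracUniformMixture
  infer_instance

lemma ae_mem_Ioc_diracUniformMixture (β : ℝ) :
    ∀ᵐ u ∂diracUniformMixture β, u ∈ Set.Ioc (0 : ℝ) 1 := by
  refine ae_add_measure_iff.2 ⟨Measure.ae_smul_measure ?_ _, Measure.ae_smul_measure ?_ _⟩
  · simp [ae_dirac_eq]
  · exact ae_restrict_mem measurableSet_Ioc

lemma ae_norm_rpow_le_one_diracUniformMixture (β : ℝ) {p : ℝ} (hp : 0 ≤ p) :
    ∀ᵐ u ∂diracUniformMixture β, ‖u ^ p‖ ≤ 1 :=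
  (ae_mem_Ioc_diracUniformMixture β).mono fun u hu => by
    rw [Real.norm_of_nonneg (Real.rpow_nonneg hu.1.le p)]
    exact Real.rpow_le_one hu.1.le hu.2 hp

lemma moment_rpow_inv_diracUniformMixture {a β : ℝ} (ha : 0 < a) (hβ0 : 0 ≤ β) (hβ1 : β ≤ 1)
    (n : ℕ) : moment (fun u => u ^ a⁻¹) n (diracUniformMixture β) = (β * n + a) / (n + a) := by
  have hint : Integrable ((fun u : ℝ => u ^ a⁻¹) ^ n) (diracUniformMixture β) := by
    refine .of_bound (by fun_prop) 1 ?_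
    filter_upwards [ae_norm_rpow_le_one_diracUniformMixture β (inv_nonneg.2 ha.le)] with u hu
    rw [Pi.pow_apply, norm_pow]
    exact pow_le_one₀ (norm_nonneg _) hu
  rw [diracUniformMixture, integrable_add_measure] at hint
  rw [moment_def, diracUniformMixture, integral_add_measure hint.1 hint.2, integral_smul_measure,
    integral_smul_measure, integral_dirac, ENNReal.toReal_ofReal hβ0,
    ENNReal.toReal_ofReal (sub_nonneg.2 hβ1)]
  simp only [Pi.pow_apply, Real.one_rpow, one_pow, smul_eq_mul, mul_one]
  rw [← intervalIntegral.integral_of_le zero_le_one, integral_rpow_inv_pow ha]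
  field_simp
  ring

lemma HasAbsMonotoneEGF.mul_affine_div {m : ℕ → ℝ} (hm : HasAbsMonotoneEGF m) {a β : ℝ}
    (ha : 0 < a) (hβ0 : 0 ≤ β) (hβ1 : β ≤ 1) :
    HasAbsMonotoneEGF fun n => m n * ((β * n + a) / (n + a)) := by
  have hpos : 0 ≤ᵐ[diracUniformMixture β] fun u => u ^ a⁻¹ :=
    (ae_mem_Ioc_diracUniformMixture β).mono fun u hu => Real.rpow_nonneg hu.1.le _
  simpa only [moment_rpow_inv_diracUniformMixture ha hβ0 hβ1] using
    hm.mul_moment (R := 1) (by fun_prop) hpos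
      (ae_norm_rpow_le_one_diracUniformMixture β (inv_nonneg.2 ha.le))

end Mixture

section Gamma

lemma rpow_mul_Gamma_add_one_le {x s : ℝ} (hx : 0 < x) (hs : 0 ≤ s) :
    x ^ s * Real.Gamma (x + 1) ≤ Real.Gamma (x + 1 + s) := by
  rcases hs.eq_or_lt with rfl | hs
  · simp
  have hΓx := Real.Gamma_pos_of_pos hx
  have hΓx1 : 0 < Real.Gamma (x + 1) := Real.Gamma_pos_of_pos (by positivity)
  have hΓxs : 0 < Real.Gamma (x + 1 + s) := Real.Gamma_pos_of_pos (by positivity)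
  have hlog : Real.log (Real.Gamma (x + 1)) - Real.log (Real.Gamma x) = Real.log x := by
    rw [Real.Gamma_add_one hx.ne', Real.log_mul hx.ne' hΓx.ne', add_sub_cancel_right]
  -- The slope of the convex function `log ∘ Γ` on `[x, x + 1]` is `log x`.
  have hslope := Real.convexOn_log_Gamma.slope_mono_adjacent (x := x) (y := x + 1) (z := x + 1 + s)
    hx (Set.mem_Ioi.2 (by positivity)) (by linarith) (by linarith)
  simp only [Function.comp_apply, hlog, add_sub_cancel_left, div_one, le_div_iff₀ hs] at hslope
  rw [← Real.log_le_log_iff (by positivity) hΓxs, Real.log_mul (by positivity) hΓx1.ne',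
    Real.log_rpow hx]
  linarith

lemma Gamma_add_natCast_eq_prod_mul {s : ℝ} (hs : 0 < s) (N : ℕ) :
    Real.Gamma (s + N) = (∏ j ∈ range N, (s + j)) * Real.Gamma s := by
  induction N with
  | zero => simp
  | succ N ih =>
    rw [prod_range_succ, Nat.cast_succ, ← add_assoc, Real.Gamma_add_one (by positivity), ih]
    ring

lemma GammaSeq_div_Gamma {s : ℝ} (hs : 0 < s) (N : ℕ) :
    Real.GammaSeq s N / Real.Gamma s = N ^ s * N.factorial / Real.Gamma (s + N + 1) := by
  rw [Real.GammaSeq, div_div, ← Gamma_add_natCast_eq_prod_mul hs, Nat.cast_succ, add_assoc]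

lemma antitoneOn_GammaSeq_div_Gamma (N : ℕ) :
    AntitoneOn (fun s => Real.GammaSeq s N / Real.Gamma s) (Set.Ioi 0) := by
  rcases N.eq_zero_or_pos with rfl | hN
  · intro s hs t ht _
    simp [GammaSeq_div_Gamma hs, GammaSeq_div_Gamma ht, Real.zero_rpow hs.ne',
      Real.zero_rpow ht.ne']
  intro s (hs : 0 < s) t (ht : 0 < t) hst
  have hΓs : 0 < Real.Gamma (s + N + 1) := Real.Gamma_pos_of_pos (by positivity)
  have hΓt : 0 < Real.Gamma (t + N + 1) := Real.Gamma_pos_of_pos (by positivity)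
  have hgrowth : (N : ℝ) ^ (t - s) * Real.Gamma (s + N + 1) ≤ Real.Gamma (t + N + 1) :=
    calc (N : ℝ) ^ (t - s) * Real.Gamma (s + N + 1)
        ≤ (s + N) ^ (t - s) * Real.Gamma (s + N + 1) := by
          gcongr
          linarith
      _ ≤ Real.Gamma (s + N + 1 + (t - s)) :=
          rpow_mul_Gamma_add_one_le (by positivity) (sub_nonneg.2 hst)
      _ = Real.Gamma (t + N + 1) := by ring_nf
  simp only [GammaSeq_div_Gamma hs, GammaSeq_div_Gamma ht]
  rw [div_le_div_iff₀ hΓt hΓs]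
  calc (N : ℝ) ^ t * N.factorial * Real.Gamma (s + N + 1)
      = N ^ s * N.factorial * (N ^ (t - s) * Real.Gamma (s + N + 1)) := by
        rw [← add_sub_cancel s t, Real.rpow_add (by positivity), add_sub_cancel_left]
        ring
    _ ≤ N ^ s * N.factorial * Real.Gamma (t + N + 1) := by gcongr

lemma summable_pow_div_Gamma {β : ℝ} (hβ : 0 < β) (r : ℝ) :
    Summable fun n : ℕ => r ^ n / Real.Gamma (β * n + 1) := by
  have hΓ (n : ℕ) : 0 < Real.Gamma (β * n + 1) := Real.Gamma_pos_of_pos (by positivity)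
  have hgrowth : Tendsto (fun n : ℕ => (β * n : ℝ) ^ β) atTop atTop :=
    (tendsto_rpow_atTop hβ).comp (tendsto_natCast_atTop_atTop.const_mul_atTop hβ)
  refine summable_of_ratio_norm_eventually_le (r := 1 / 2) (by norm_num) ?_
  filter_upwards [hgrowth.eventually_ge_atTop (2 * |r|), eventually_gt_atTop 0] with n hn hn0
  have hratio : 2 * |r| * Real.Gamma (β * n + 1) ≤ Real.Gamma (β * (n + 1 : ℕ) + 1) :=
    calc 2 * |r| * Real.Gamma (β * n + 1) ≤ (β * n) ^ β * Real.Gamma (β * n + 1) :=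
          mul_le_mul_of_nonneg_right hn (hΓ n).le
      _ ≤ Real.Gamma (β * n + 1 + β) := rpow_mul_Gamma_add_one_le (by positivity) hβ.le
      _ = Real.Gamma (β * (n + 1 : ℕ) + 1) := by
          push_cast
          ring_nf
  rw [norm_div, norm_div, norm_pow, norm_pow, Real.norm_of_nonneg (hΓ _).le,
    Real.norm_of_nonneg (hΓ _).le, Real.norm_eq_abs, ← mul_div_assoc, div_le_div_iff₀ (hΓ _) (hΓ _)]
  calc |r| ^ (n + 1) * Real.Gamma (β * n + 1)
      = 1 / 2 * |r| ^ n * (2 * |r| * Real.Gamma (β * n + 1)) := by ring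
    _ ≤ 1 / 2 * |r| ^ n * Real.Gamma (β * (n + 1 : ℕ) + 1) := by gcongr

end Gamma

section MittagLeffler

/-- The `n`-th moment `n! / Γ(βn + 1)` of the Mittag-Leffler distribution, whose exponential
generating function is `E_β`. -/
def mittagLefflerMoment (β : ℝ) (n : ℕ) : ℝ := n.factorial / Real.Gamma (β * n + 1)

/-- The `N`-th approximant to `mittagLefflerMoment β n`, obtained by replacing both Gamma values in
`Γ(n + 1) / Γ(βn + 1)` by their approximants in Euler's limit formula. -/
def mittagLefflerMomentSeq (β : ℝ) (N n : ℕ) : ℝ :=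
  Real.GammaSeq (n + 1) N / Real.GammaSeq (β * n + 1) N

lemma mittagLefflerR_eq_egf (β : ℝ) : mittagLefflerR β = egf (mittagLefflerMoment β) := by
  ext x
  refine tsum_congr fun n => ?_
  rw [mittagLefflerMoment]
  field_simp

lemma mittagLeffler_eq_egf (β : ℝ) :
    mittagLeffler β = egf fun n => (mittagLefflerMoment β n : ℂ) := by
  ext z
  refine tsum_congr fun n => ?_
  have : (n.factorial : ℂ) ≠ 0 := Nat.cast_ne_zero.2 n.factorial_ne_zero
  simp only [mittagLefflerMoment, Complex.Gamma_ofReal, Complex.ofReal_div, Complex.ofReal_natCast]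
  field_simp

variable {β : ℝ}

lemma hasEntireEGF_mittagLefflerMoment (hβ : 0 < β) : HasEntireEGF (mittagLefflerMoment β) := by
  refine fun r _ => (summable_pow_div_Gamma hβ r).congr fun n => ?_
  have hΓ : 0 < Real.Gamma (β * n + 1) := Real.Gamma_pos_of_pos (by positivity)
  rw [mittagLefflerMoment,
    Real.norm_of_nonneg (div_pos (Nat.cast_pos.2 n.factorial_pos) hΓ).le]
  field_simp

lemma mittagLefflerMomentSeq_eq_prod (hβ : 0 ≤ β) {N : ℕ} (hN : N ≠ 0) (n : ℕ) :
    mittagLefflerMomentSeq β N n =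
      (∏ j ∈ range (N + 1), (β * n + (1 + j)) / (n + (1 + j))) * ((N : ℝ) ^ (1 - β)) ^ n := by
  have hpow : (N : ℝ) ^ ((n : ℝ) + 1) = N ^ (β * n + 1) * (N ^ (1 - β)) ^ n := by
    rw [← Real.rpow_mul_natCast (by positivity), ← Real.rpow_add (by positivity)]
    ring_nf
  have hnum : ∏ j ∈ range (N + 1), (β * n + 1 + j) ≠ 0 := by positivity
  have hden : ∏ j ∈ range (N + 1), ((n : ℝ) + 1 + j) ≠ 0 := by positivity
  simp only [mittagLefflerMomentSeq, Real.GammaSeq, prod_div_distrib, hpow, ← add_assoc]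
  field_simp

lemma tendsto_mittagLefflerMomentSeq (hβ : 0 ≤ β) (n : ℕ) :
    Tendsto (mittagLefflerMomentSeq β · n) atTop (𝓝 (mittagLefflerMoment β n)) := by
  rw [mittagLefflerMoment, ← Real.Gamma_nat_eq_factorial]
  exact (Real.GammaSeq_tendsto_Gamma _).div (Real.GammaSeq_tendsto_Gamma _)
    (Real.Gamma_pos_of_pos (by positivity)).ne'

lemma norm_mittagLefflerMomentSeq_le (hβ0 : 0 ≤ β) (hβ1 : β ≤ 1) {N : ℕ} (hN : N ≠ 0) (n : ℕ) :
    ‖mittagLefflerMomentSeq β N n‖ ≤ ‖mittagLefflerMoment β n‖ := by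
  have hpos {s : ℝ} (hs : 0 < s) : 0 < Real.GammaSeq s N := by
    unfold Real.GammaSeq
    positivity
  have hs : 0 < (n : ℝ) + 1 := by positivity
  have ht : 0 < β * n + 1 := by positivity
  have hts : β * n + 1 ≤ n + 1 := by
    gcongr
    exact mul_le_of_le_one_left n.cast_nonneg hβ1
  have hΓs := Real.Gamma_pos_of_pos hs
  have hΓt := Real.Gamma_pos_of_pos ht
  have hanti := antitoneOn_GammaSeq_div_Gamma N ht hs hts
  rw [div_le_div_iff₀ hΓs hΓt] at hanti
  rw [mittagLefflerMomentSeq, mittagLefflerMoment, ← Real.Gamma_nat_eq_factorial,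
    Real.norm_of_nonneg (div_pos (hpos hs) (hpos ht)).le, Real.norm_of_nonneg (by positivity),
    div_le_div_iff₀ (hpos ht) hΓt, mul_comm (Real.Gamma _)]
  exact hanti

lemma hasAbsMonotoneEGF_prod_affine_div (hβ0 : 0 ≤ β) (hβ1 : β ≤ 1) (N : ℕ) :
    HasAbsMonotoneEGF fun n => ∏ j ∈ range N, (β * n + (1 + j)) / (n + (1 + j)) := by
  induction N with
  | zero => simpa using HasAbsMonotoneEGF.one
  | succ N ih =>
    simpa only [prod_range_succ] using ih.mul_affine_div (by positivity) hβ0 hβ1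

lemma hasAbsMonotoneEGF_mittagLefflerMomentSeq (hβ0 : 0 ≤ β) (hβ1 : β ≤ 1) {N : ℕ} (hN : N ≠ 0) :
    HasAbsMonotoneEGF (mittagLefflerMomentSeq β N) := by
  rw [funext (mittagLefflerMomentSeq_eq_prod hβ0 hN)]
  exact (hasAbsMonotoneEGF_prod_affine_div hβ0 hβ1 (N + 1)).mul_pow (by positivity)

lemma hasAbsMonotoneEGF_mittagLefflerMoment (hβ0 : 0 < β) (hβ1 : β ≤ 1) :
    HasAbsMonotoneEGF (mittagLefflerMoment β) :=
  .of_tendsto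
    ((eventually_ne_atTop 0).mono fun _ => hasAbsMonotoneEGF_mittagLefflerMomentSeq hβ0.le hβ1)
    (hasEntireEGF_mittagLefflerMoment hβ0)
    ((eventually_ne_atTop 0).mono fun _ => norm_mittagLefflerMomentSeq_le hβ0.le hβ1)
    (tendsto_mittagLefflerMomentSeq hβ0.le)

lemma iteratedDeriv_mittagLefflerR_nonneg (hβ0 : 0 < β) (hβ1 : β ≤ 1) (k : ℕ) {x : ℝ}
    (hx : x ≤ 0) : 0 ≤ iteratedDeriv k (mittagLefflerR β) x := by
  have hm := hasAbsMonotoneEGF_mittagLefflerMoment hβ0 hβ1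
  rw [mittagLefflerR_eq_egf, hm.entire.iteratedDeriv_egf]
  exact hm.egf_shift_nonneg k hx

lemma ofReal_iteratedDeriv_mittagLefflerR (hβ : 0 < β) (k : ℕ) (x : ℝ) :
    ((iteratedDeriv k (mittagLefflerR β) x : ℝ) : ℂ) = iteratedDeriv k (mittagLeffler β) x := by
  have hm := hasEntireEGF_mittagLefflerMoment hβ
  have hmC : HasEntireEGF fun n => (mittagLefflerMoment β n : ℂ) := hm.mono fun n => by simp
  rw [mittagLefflerR_eq_egf, mittagLeffler_eq_egf, hm.iteratedDeriv_egf, hmC.iteratedDeriv_egf,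
    ofReal_egf]

lemma hasSum_taylor_mittagLeffler (hβ : 0 < β) (a b : ℂ) :
    HasSum (fun k : ℕ => a ^ k / k.factorial * iteratedDeriv k (mittagLeffler β) b)
      (mittagLeffler β (b + a)) := by
  have hm : HasEntireEGF fun n => (mittagLefflerMoment β n : ℂ) :=
    (hasEntireEGF_mittagLefflerMoment hβ).mono fun n => by simp
  rw [mittagLeffler_eq_egf]
  exact hm.hasSum_taylor a b

lemma integral_exp_fracPoisson {lam : ℝ} (hlam : 0 ≤ lam) (hβ0 : 0 < β) (hβ1 : β ≤ 1) (z : ℂ) :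
    ∫ x : ℝ, Complex.exp (z * x) ∂(fracPoisson lam β) =
      ∑' k : ℕ, (Complex.exp z * lam) ^ k / (k.factorial : ℂ) *
        ((iteratedDeriv k (mittagLefflerR β) (-lam) : ℝ) : ℂ) := by
  rw [fracPoisson, integral_sum_dirac fun _ => ENNReal.ofReal_ne_top]
  refine tsum_congr fun k => ?_
  have hderiv := iteratedDeriv_mittagLefflerR_nonneg hβ0 hβ1 k (neg_nonpos.2 hlam)
  rw [ENNReal.toReal_ofReal (by positivity), Complex.real_smul, Complex.ofReal_natCast, mul_comm z,
    Complex.exp_nat_mul]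
  push_cast
  ring

end MittagLeffler

theorem stmt0 (lam β : ℝ) (hlam : 0 < lam) (hβ0 : 0 < β) (hβ1 : β ≤ 1) (z : ℂ) :
    (∫ x : ℝ, Complex.exp (z * x) ∂(fracPoisson lam β)) =
      (∑' k : ℕ, (Complex.exp z * lam) ^ k / (k.factorial : ℂ) *
        ((iteratedDeriv k (mittagLefflerR β) (-lam) : ℝ) : ℂ)) ∧
    (∫ x : ℝ, Complex.exp (z * x) ∂(fracPoisson lam β)) =
      mittagLeffler β (lam * (Complex.exp z - 1)) := by
  have hlaplace := integral_exp_fracPoisson hlam.le hβ0 hβ1 z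
  have htaylor := hasSum_taylor_mittagLeffler hβ0 (Complex.exp z * lam) (-lam : ℝ)
  have harg : ((-lam : ℝ) : ℂ) + Complex.exp z * lam = lam * (Complex.exp z - 1) := by
    push_cast
    ring
  simp only [← ofReal_iteratedDeriv_mittagLefflerR hβ0, harg] at htaylor
  exact ⟨hlaplace, hlaplace.trans htaylor.tsum_eq⟩
end
end

section
/- Let λ > 0 and β ∈ (0,1], and let ν_β be a probability measure on [0,∞) whose Laplace transform satisfies ∫_0^∞ e^{−zτ} dν_β(τ) = E_β(−z) for all z ≥ 0. Then the fractional Poisson measure π_{λ,β} is the mixture of Poisson measures π_{λ,β} = ∫_0^∞ π_{λτ} dν_β(τ); equivalently, for every k ∈ ℕ₀, (λ^k/k!) E_β^{(k)}(−λ) = ∫_0^∞ ((λτ)^k/k!) e^{−λτ} dν_β(τ). -/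
/-!
By Tonelli, the mixture of the Poisson laws of rate `λ X` with `X ≥ 0` gives `k` the weight
`(λᵏ/k!) ∫ Xᵏ exp (-λ X)`. When `-λ` is interior to the domain of the moment generating function
of `X`, this integral is the `k`-th derivative of that function at `-λ`, hence also that of any
function which agrees with it near `-λ`, such as `E_β`. Under a finite measure `exp (t X)` is
integrable for every `t ≤ 0`, so each `λ > 0` is covered.
-/

open MeasureTheory Finset
open scoped ENNReal NNReal

noncomputable section

open ProbabilityTheory Topology

/-- The analogue of the Poisson measure of rate `lam` generated by `f` in place of `exp`: it gives
`k` the weight `(lamᵏ/k!) f⁽ᵏ⁾(-lam)`. Taking `f = E_β` gives `fracPoisson lam β`. Negative weights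
are truncated to `0`. -/
def generalizedPoisson (lam : ℝ) (f : ℝ → ℝ) : Measure ℝ :=
  Measure.sum fun k : ℕ =>
    ENNReal.ofReal (lam ^ k / k.factorial * iteratedDeriv k f (-lam)) • Measure.dirac (k : ℝ)

section BindSum

variable {Ω E ι : Type*} [MeasurableSpace Ω] [MeasurableSpace E] {w : ι → Ω → ℝ≥0∞}

lemma measurable_measure_sum_smul [Countable ι] (hw : ∀ i, Measurable (w i)) (m : ι → Measure E) :
    Measurable fun ω => Measure.sum fun i => w i ω • m i := by
  refine Measure.measurable_of_measurable_coe _ fun s hs => ?_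
  simp only [Measure.sum_apply _ hs, Measure.smul_apply, smul_eq_mul]
  fun_prop

lemma aemeasurable_measure_sum_smul [Countable ι] {μ : Measure Ω}
    (hw : ∀ i, AEMeasurable (w i) μ) (m : ι → Measure E) :
    AEMeasurable (fun ω => Measure.sum fun i => w i ω • m i) μ := by
  refine ⟨_, measurable_measure_sum_smul (fun i => (hw i).measurable_mk) m, ?_⟩
  filter_upwards [ae_all_iff.2 fun i => (hw i).ae_eq_mk] with ω hω
  simp only [hω]

lemma bind_measure_sum_smul [Countable ι] {μ : Measure Ω}
    (hw : ∀ i, AEMeasurable (w i) μ) (m : ι → Measure E) :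
    μ.bind (fun ω => Measure.sum fun i => w i ω • m i) =
      Measure.sum fun i => (∫⁻ ω, w i ω ∂μ) • m i := by
  ext s hs
  rw [Measure.bind_apply hs (aemeasurable_measure_sum_smul hw m)]
  simp only [Measure.sum_apply _ hs, Measure.smul_apply, smul_eq_mul]
  rw [lintegral_tsum fun i => (hw i).mul_const _]
  simp only [lintegral_mul_const'' _ (hw _)]

end BindSum

section MixedPoisson

variable {Ω : Type*} [MeasurableSpace Ω] {μ : Measure Ω} {X : Ω → ℝ} {lam : ℝ}

lemma bind_poissonMeasureR (hX : AEMeasurable X μ) :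
    μ.bind (fun ω => poissonMeasureR (X ω)) =
      Measure.sum fun k : ℕ =>
        (∫⁻ ω, ENNReal.ofReal (X ω ^ k / k.factorial * Real.exp (-X ω)) ∂μ) •
          Measure.dirac (k : ℝ) :=
  bind_measure_sum_smul (fun _ => by fun_prop) _

lemma Iic_zero_subset_integrableExpSet [IsFiniteMeasure μ] (hX : AEMeasurable X μ)
    (hX0 : ∀ᵐ ω ∂μ, 0 ≤ X ω) : Set.Iic 0 ⊆ integrableExpSet X μ := by
  intro t ht
  refine (integrable_const (1 : ℝ)).mono' (by fun_prop) ?_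
  filter_upwards [hX0] with ω hω
  rw [Real.norm_eq_abs, Real.abs_exp, Real.exp_le_one_iff]
  exact mul_nonpos_of_nonpos_of_nonneg ht hω

lemma neg_mem_interior_integrableExpSet [IsFiniteMeasure μ] (hX : AEMeasurable X μ)
    (hX0 : ∀ᵐ ω ∂μ, 0 ≤ X ω) (hlam : 0 < lam) : -lam ∈ interior (integrableExpSet X μ) := by
  refine interior_mono (Iic_zero_subset_integrableExpSet hX hX0) ?_
  rw [interior_Iic]
  exact neg_neg_of_pos hlam

lemma eventuallyEq_mgf_of_laplace {f : ℝ → ℝ} (hlam : 0 < lam)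
    (hf : ∀ z : ℝ, 0 < z → ∫ ω, Real.exp (-z * X ω) ∂μ = f (-z)) : f =ᶠ[𝓝 (-lam)] mgf X μ := by
  filter_upwards [Iio_mem_nhds (neg_neg_of_pos hlam)] with t ht
  simpa only [neg_neg, mgf] using (hf (-t) (neg_pos.2 ht)).symm

lemma poissonWeight_mul (lam τ : ℝ) (k : ℕ) :
    (lam * τ) ^ k / k.factorial * Real.exp (-(lam * τ)) =
      lam ^ k / k.factorial * (τ ^ k * Real.exp (-lam * τ)) := by
  rw [mul_pow, neg_mul]
  ring

lemma integrable_poissonWeight (hint : -lam ∈ interior (integrableExpSet X μ)) (k : ℕ) :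
    Integrable (fun ω => (lam * X ω) ^ k / k.factorial * Real.exp (-(lam * X ω))) μ := by
  simp only [poissonWeight_mul]
  exact (integrable_pow_mul_exp_of_mem_interior_integrableExpSet hint k).const_mul _

lemma integral_poissonWeight (hint : -lam ∈ interior (integrableExpSet X μ)) (k : ℕ) :
    ∫ ω, (lam * X ω) ^ k / k.factorial * Real.exp (-(lam * X ω)) ∂μ =
      lam ^ k / k.factorial * iteratedDeriv k (mgf X μ) (-lam) := by
  simp only [poissonWeight_mul]
  rw [integral_const_mul, iteratedDeriv_mgf hint k]

lemma lintegral_poissonWeight (hint : -lam ∈ interior (integrableExpSet X μ)) (hlam : 0 ≤ lam)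
    (hX0 : ∀ᵐ ω ∂μ, 0 ≤ X ω) (k : ℕ) :
    ∫⁻ ω, ENNReal.ofReal ((lam * X ω) ^ k / k.factorial * Real.exp (-(lam * X ω))) ∂μ =
      ENNReal.ofReal (lam ^ k / k.factorial * iteratedDeriv k (mgf X μ) (-lam)) := by
  rw [← integral_poissonWeight hint k,
    ofReal_integral_eq_lintegral_ofReal (integrable_poissonWeight hint k)]
  filter_upwards [hX0] with ω hω
  simp only [Pi.zero_apply]
  positivity

lemma generalizedPoisson_mgf (hint : -lam ∈ interior (integrableExpSet X μ)) (hlam : 0 ≤ lam)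
    (hX0 : ∀ᵐ ω ∂μ, 0 ≤ X ω) :
    generalizedPoisson lam (mgf X μ) = μ.bind (fun ω => poissonMeasureR (lam * X ω)) := by
  rw [bind_poissonMeasureR ((aemeasurable_of_mem_interior_integrableExpSet hint).const_mul lam)]
  simp only [lintegral_poissonWeight hint hlam hX0, generalizedPoisson]

lemma generalizedPoisson_congr {f g : ℝ → ℝ} (hfg : f =ᶠ[𝓝 (-lam)] g) :
    generalizedPoisson lam f = generalizedPoisson lam g := by
  simp only [generalizedPoisson, hfg.iteratedDeriv_eq]

theorem stmt1_general {f : ℝ → ℝ} (hlam : 0 ≤ lam) (hX0 : ∀ᵐ ω ∂μ, 0 ≤ X ω)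
    (hint : -lam ∈ interior (integrableExpSet X μ)) (hf : f =ᶠ[𝓝 (-lam)] mgf X μ) :
    generalizedPoisson lam f = μ.bind (fun ω => poissonMeasureR (lam * X ω)) ∧
    ∀ k : ℕ, lam ^ k / k.factorial * iteratedDeriv k f (-lam) =
      ∫ ω, (lam * X ω) ^ k / k.factorial * Real.exp (-(lam * X ω)) ∂μ := by
  refine ⟨?_, fun k => ?_⟩
  · rw [generalizedPoisson_congr hf, generalizedPoisson_mgf hint hlam hX0]
  · rw [integral_poissonWeight hint, hf.iteratedDeriv_eq]

end MixedPoisson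

theorem stmt1 (lam β : ℝ) (hlam : 0 < lam) (hβ0 : 0 < β) (hβ1 : β ≤ 1)
    (ν : Measure ℝ) [IsProbabilityMeasure ν] (hsupp : ν {x | x < 0} = 0)
    (hLT : ∀ z : ℝ, 0 ≤ z → ∫ τ, Real.exp (-z * τ) ∂ν = mittagLefflerR β (-z)) :
    fracPoisson lam β = ν.bind (fun τ => poissonMeasureR (lam * τ)) ∧
    ∀ k : ℕ, lam ^ k / k.factorial * iteratedDeriv k (mittagLefflerR β) (-lam) =
      ∫ τ, (lam * τ) ^ k / k.factorial * Real.exp (-(lam * τ)) ∂ν := by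
  have hpos : ∀ᵐ τ ∂ν, 0 ≤ τ := by simpa only [ae_iff, not_le] using hsupp
  exact stmt1_general hlam.le hpos (neg_mem_interior_integrableExpSet aemeasurable_id hpos hlam)
    (eventuallyEq_mgf_of_laplace hlam fun z hz => hLT z hz.le)
end
end

section
/- Let λ > 0 and β ∈ (0,1]. The fractional Poisson measure π_{λ,β} has moments of all orders, and for every n ∈ ℕ₀ its n-th moment is M_{λ,β}(n) := ∫_ℝ x^n dπ_{λ,β}(x) = ∑_{m=0}^n (m!/Γ(mβ + 1)) S(n,m) λ^m, where S(n,m) are the Stirling numbers of the second kind. -/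
/-!
The weights of `fracPoisson` are truncated at zero by `ENNReal.ofReal`, so the moment formula rests
on the complete monotonicity of `x ↦ E_β(-x)`, that is, on `0 ≤ E_β⁽ᵏ⁾(-x)` for `0 ≤ x`.

For this, consider the renewal process whose interarrival times have the generating function
`1 - (1 - z) ^ β`, and let `R` be its number of renewals up to time `N`. Then `𝔼 C(R + j, j)` is the
coefficient of `z ^ N` in `(1 - z) ^ (-(β j + 1))`, which is asymptotic to `N ^ (β j) / Γ(β j + 1)`.
Hence, with `μ = x / N ^ β`, the series `∑ⱼ (-μ) ^ j 𝔼 C(R + j, j) = 𝔼 (1 + μ) ^ (-(R + 1))` tends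
to `E_β(-x)` as `N → ∞`, and so do its derivatives in `x`, whose signs are evident.

For the moments, evaluate at `0` the Taylor expansion of the entire function `E_β⁽ᵐ⁾` about `-λ`:
the `m`-th binomial moment of `π_{λ,β}` is `λ ^ m E_β⁽ᵐ⁾(0) / m! = λ ^ m / Γ(β m + 1)`. It remains
to expand `k ^ n = ∑ₘ m! S(n, m) C(k, m)`.
-/

open MeasureTheory Finset
open scoped ENNReal NNReal

noncomputable section

open Filter Topology PowerSeries

/-! ### The power series `(1 - X) ^ (-s)` -/

section MultichooseSeries

variable {R : Type*} [CommRing R] [BinomialRing R]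

/-- The power series `(1 - X) ^ (-s)` over a binomial ring. Its coefficients are the numbers
`s (s + 1) ⋯ (s + n - 1) / n!`. -/
def multichooseSeries (s : R) : R⟦X⟧ := PowerSeries.mk (Ring.multichoose s)

lemma multichooseSeries_eq_rescale (s : R) :
    multichooseSeries s = rescale (-1) (binomialSeries R (-s)) := by
  ext n
  rw [multichooseSeries, coeff_mk, coeff_rescale, binomialSeries_coeff, Ring.choose_neg',
    Units.smul_def, zsmul_eq_mul, Int.cast_negOnePow_natCast, smul_eq_mul, mul_one, ← mul_assoc,
    ← mul_pow, neg_one_mul, neg_neg, one_pow, one_mul]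

lemma multichooseSeries_add (s t : R) :
    multichooseSeries (s + t) = multichooseSeries s * multichooseSeries t := by
  simp only [multichooseSeries_eq_rescale, neg_add, binomialSeries_add, map_mul]

lemma multichooseSeries_natCast_mul (n : ℕ) (s : R) :
    multichooseSeries (n * s) = multichooseSeries s ^ n := by
  induction n with
  | zero => simp [multichooseSeries_eq_rescale]
  | succ n ih => rw [Nat.cast_succ, add_one_mul, multichooseSeries_add, ih, pow_succ]

end MultichooseSeries

lemma succ_mul_multichoose_succ (s : ℝ) (n : ℕ) :
    (n + 1) * Ring.multichoose s (n + 1) = (s + n) * Ring.multichoose s n := by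
  have eval_eq (k : ℕ) : (k.factorial : ℝ) * Ring.multichoose s k = (ascPochhammer ℝ k).eval s := by
    rw [← nsmul_eq_mul, Ring.factorial_nsmul_multichoose_eq_ascPochhammer,
      Polynomial.ascPochhammer_smeval_eq_eval]
  have h := eval_eq (n + 1)
  rw [ascPochhammer_succ_eval, ← eval_eq, Nat.factorial_succ] at h
  push_cast at h
  apply mul_left_cancel₀ (Nat.cast_ne_zero.2 n.factorial_ne_zero : (n.factorial : ℝ) ≠ 0)
  linear_combination h

lemma multichoose_nonneg {s : ℝ} (hs : 0 ≤ s) (n : ℕ) : 0 ≤ Ring.multichoose s n := by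
  induction n with
  | zero => simp
  | succ n ih =>
    refine nonneg_of_mul_nonneg_right (a := (n : ℝ) + 1) ?_ (by positivity)
    rw [succ_mul_multichoose_succ]
    positivity

lemma multichoose_pos {s : ℝ} (hs : 0 < s) (n : ℕ) : 0 < Ring.multichoose s n := by
  induction n with
  | zero => simp
  | succ n ih =>
    refine pos_of_mul_pos_right (a := (n : ℝ) + 1) ?_ (by positivity)
    rw [succ_mul_multichoose_succ]
    positivity

lemma multichoose_neg_succ_nonpos {β : ℝ} (h0 : 0 ≤ β) (h1 : β ≤ 1) (n : ℕ) :
    Ring.multichoose (-β) (n + 1) ≤ 0 := by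
  induction n with
  | zero => simpa using h0
  | succ n ih =>
    refine nonpos_of_mul_nonpos_right (a := ((n + 1 : ℕ) : ℝ) + 1) ?_ (by positivity)
    rw [succ_mul_multichoose_succ]
    refine mul_nonpos_of_nonneg_of_nonpos ?_ ih
    push_cast
    linarith [n.cast_nonneg (α := ℝ)]

/-! ### Renewal counts -/

section NonnegCoeff

variable {R : Type*} [Semiring R] [PartialOrder R] [IsOrderedRing R] {f g : R⟦X⟧}

lemma coeff_mul_nonneg (hf : ∀ n, 0 ≤ coeff n f) (hg : ∀ n, 0 ≤ coeff n g) (n : ℕ) :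
    0 ≤ coeff n (f * g) := by
  rw [coeff_mul]
  exact sum_nonneg fun p _ => mul_nonneg (hf p.1) (hg p.2)

lemma coeff_pow_nonneg (hf : ∀ n, 0 ≤ coeff n f) (k n : ℕ) : 0 ≤ coeff n (f ^ k) := by
  induction k generalizing n with
  | zero => rw [pow_zero, coeff_one]; split_ifs <;> simp
  | succ k ih => rw [pow_succ]; exact coeff_mul_nonneg ih hf n

end NonnegCoeff

section CommRing

variable {R : Type*} [CommRing R]

lemma one_sub_mul_sum_choose_succ (x : R) (n j : ℕ) :
    (1 - x) * ∑ r ∈ range n, ((r + (j + 1)).choose (j + 1) : R) * x ^ r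
      = ∑ r ∈ range n, ((r + j).choose j : R) * x ^ r - ((n + j).choose (j + 1) : R) * x ^ n := by
  induction n with
  | zero => simp
  | succ n ih =>
    have pascal : ((n + (j + 1)).choose (j + 1) : R)
        = (n + j).choose j + (n + j).choose (j + 1) := by
      rw [← add_assoc, Nat.choose_succ_succ, Nat.cast_add]
    rw [sum_range_succ, mul_add, ih, sum_range_succ, pascal, add_right_comm n 1 j, add_assoc,
      pascal]
    ring

lemma pow_dvd_one_sub_mul_sum_choose (x : R) (n j : ℕ) :
    x ^ n ∣ 1 - (1 - x) ^ (j + 1) * ∑ r ∈ range n, ((r + j).choose j : R) * x ^ r := by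
  induction j with
  | zero => simp [mul_neg_geom_sum]
  | succ j ih =>
    rw [pow_succ, mul_assoc, one_sub_mul_sum_choose_succ, mul_sub, ← sub_add]
    exact dvd_add ih (((dvd_refl _).mul_left _).mul_left _)

/-- The expansion of `(1 - B) ^ (-(j + 1))` in powers of `B` may be cut off after `B ^ N`, since
`B ^ (N + 1)` vanishes to order `N + 1`. -/
lemma coeff_eq_sum_choose_mul_coeff {B : R⟦X⟧} (hB : constantCoeff B = 0) (q : R⟦X⟧) (N j : ℕ) :
    coeff N q = ∑ r ∈ range (N + 1),
      ((r + j).choose j : R) * coeff N (B ^ r * (q * (1 - B) ^ (j + 1))) := by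
  have hdvd : X ^ (N + 1) ∣ q - q * ((1 - B) ^ (j + 1) *
      ∑ r ∈ range (N + 1), ((r + j).choose j : R⟦X⟧) * B ^ r) := by
    rw [← mul_one_sub]
    exact ((pow_dvd_pow_of_dvd (X_dvd_iff.2 hB) _).trans
      (pow_dvd_one_sub_mul_sum_choose B (N + 1) j)).mul_left q
  have hcoeff := X_pow_dvd_iff.1 hdvd N N.lt_succ_self
  rw [map_sub, sub_eq_zero] at hcoeff
  rw [hcoeff, ← mul_assoc, mul_sum, map_sum]
  refine sum_congr rfl fun r _ => ?_
  rw [← coeff_C_mul, map_natCast]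
  congr 1
  ring

end CommRing

/-- The Sibuya distribution with parameter `β` has generating function `1 - (1 - X) ^ β`. For a
renewal process with these interarrival times, `renewalProb β N r` is the probability of exactly
`r` renewals up to time `N`: the factor `(1 - X) ^ (β - 1)` generates the tail probabilities. -/
def renewalProb (β : ℝ) (N r : ℕ) : ℝ :=
  coeff N ((1 - multichooseSeries (-β)) ^ r * multichooseSeries (1 - β))

lemma renewalProb_nonneg {β : ℝ} (h0 : 0 ≤ β) (h1 : β ≤ 1) (N r : ℕ) : 0 ≤ renewalProb β N r := by
  refine coeff_mul_nonneg (coeff_pow_nonneg (fun n => ?_) r) (fun n => ?_) N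
  · cases n with
    | zero => simp [multichooseSeries]
    | succ n =>
      simpa [multichooseSeries, coeff_one] using multichoose_neg_succ_nonpos h0 h1 n
  · simpa [multichooseSeries] using multichoose_nonneg (sub_nonneg.2 h1) n

lemma sum_choose_mul_renewalProb (β : ℝ) (N j : ℕ) :
    ∑ r ∈ range (N + 1), ((r + j).choose j : ℝ) * renewalProb β N r
      = Ring.multichoose (β * j + 1) N := by
  have hB : constantCoeff (1 - multichooseSeries (-β)) = 0 := by
    rw [← coeff_zero_eq_constantCoeff_apply]; simp [multichooseSeries]
  have hmul : multichooseSeries (β * j + 1) * (1 - (1 - multichooseSeries (-β))) ^ (j + 1)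
      = multichooseSeries (1 - β) := by
    rw [sub_sub_cancel, ← multichooseSeries_natCast_mul, ← multichooseSeries_add]
    push_cast
    ring_nf
  have h := coeff_eq_sum_choose_mul_coeff hB (multichooseSeries (β * j + 1)) N j
  rw [hmul, multichooseSeries, coeff_mk] at h
  exact h.symm

lemma add_choose_mul_choose (k j r : ℕ) :
    (k + j).choose k * (r + (k + j)).choose (k + j)
      = (r + k).choose k * (j + (r + k)).choose (r + k) := by
  have hn : r + (k + j) - k = r + j := by omega
  have hn' : j + (r + k) - k = r + j := by omega
  rw [mul_comm, Nat.choose_mul (Nat.le_add_right k j), mul_comm ((r + k).choose k),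
    Nat.choose_mul (Nat.le_add_left k r), hn, hn', Nat.add_sub_cancel_left, Nat.add_sub_cancel,
    Nat.choose_symm_add, show j + (r + k) = r + (k + j) by omega]

/-- Up to the factor `(-1) ^ k / k!`, the series is the `k`-th derivative in `μ` of
`∑ r, renewalProb β N r / (1 + μ) ^ (r + 1)`. -/
lemma tsum_choose_mul_multichoose_nonneg {β μ : ℝ} (h0 : 0 ≤ β) (h1 : β ≤ 1) (hμ0 : 0 ≤ μ)
    (hμ1 : μ < 1) (k N : ℕ) :
    0 ≤ ∑' j : ℕ, ((k + j).choose k : ℝ) * (-μ) ^ j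
      * Ring.multichoose (β * (k + j : ℕ) + 1) N := by
  have hsum (r : ℕ) : HasSum (fun j : ℕ => ((k + j).choose k : ℝ) * (-μ) ^ j
      * ((r + (k + j)).choose (k + j) * renewalProb β N r))
      (renewalProb β N r * (r + k).choose k * (1 / (1 - -μ) ^ (r + k + 1))) := by
    refine ((hasSum_choose_mul_geometric_of_norm_lt_one (r + k) (r := -μ) ?_).mul_left
      (renewalProb β N r * (r + k).choose k)).congr_fun fun j => ?_
    · rwa [norm_neg, Real.norm_of_nonneg hμ0]
    · have hchoose := congrArg (Nat.cast (R := ℝ)) (add_choose_mul_choose k j r)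
      push_cast at hchoose
      linear_combination (-μ) ^ j * renewalProb β N r * hchoose
  have h := hasSum_sum (s := range (N + 1)) fun r _ => hsum r
  simp only [← mul_sum, sum_choose_mul_renewalProb] at h
  rw [h.tsum_eq]
  refine sum_nonneg fun r _ => ?_
  have := renewalProb_nonneg h0 h1 N r
  rw [sub_neg_eq_add]
  positivity

/-! ### Asymptotics and growth of the coefficients -/

lemma tendsto_multichoose_div_rpow {s : ℝ} (hs : -1 < s) :
    Tendsto (fun N : ℕ => Ring.multichoose (s + 1) N / (N : ℝ) ^ s) atTop
      (𝓝 (Real.Gamma (s + 1))⁻¹) := by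
  have hs' : 0 < s + 1 := by linarith
  have prod_eq (N : ℕ) : ∏ j ∈ range N, (s + 1 + j)
      = N.factorial * Ring.multichoose (s + 1) N := by
    induction N with
    | zero => simp
    | succ N ih =>
      rw [prod_range_succ, ih, Nat.factorial_succ]
      push_cast
      linear_combination -(N.factorial : ℝ) * succ_mul_multichoose_succ (s + 1) N
  have hlim := ((Real.GammaSeq_tendsto_Gamma (s + 1)).div
    (tendsto_natCast_div_add_atTop (s + 1)) one_ne_zero).inv₀
    (by simpa using (Real.Gamma_pos_of_pos hs').ne')
  rw [div_one] at hlim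
  refine hlim.congr' ?_
  filter_upwards [eventually_gt_atTop 0] with N hN
  have hN0 : (0 : ℝ) < N := by exact_mod_cast hN
  have hmul := multichoose_pos hs' N
  have : 0 < s + 1 + N := by positivity
  rw [Pi.div_apply, Real.GammaSeq, prod_range_succ, prod_eq, Real.rpow_add_one hN0.ne',
    add_comm (N : ℝ)]
  field_simp

lemma antitoneOn_multichoose_div_rpow {s : ℝ} (hs : 0 ≤ s) :
    AntitoneOn (fun N : ℕ => Ring.multichoose (s + 1) N / (N : ℝ) ^ s) (Set.Ici 1) := by
  refine antitoneOn_nat_Ici_of_succ_le fun N hN => ?_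
  have hN0 : (0 : ℝ) < N := by exact_mod_cast hN
  have hfactor : 1 + s / (N + 1) ≤ ((N + 1) / N : ℝ) ^ s := by
    have hlog : 1 / ((N : ℝ) + 1) ≤ Real.log ((N + 1) / N) := by
      convert Real.one_sub_inv_le_log_of_pos (x := ((N : ℝ) + 1) / N) (by positivity) using 1
      field_simp
      ring
    calc 1 + s / (N + 1) ≤ Real.exp (s / (N + 1)) := by
          rw [add_comm]; exact Real.add_one_le_exp _
      _ ≤ Real.exp (Real.log ((N + 1) / N) * s) := by
          gcongr; simpa [mul_comm, div_eq_mul_inv] using mul_le_mul_of_nonneg_right hlog hs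
      _ = ((N + 1) / N : ℝ) ^ s := (Real.rpow_def_of_pos (by positivity) s).symm
  have hrec : Ring.multichoose (s + 1) (N + 1)
      = (1 + s / (N + 1)) * Ring.multichoose (s + 1) N := by
    have := succ_mul_multichoose_succ (s + 1) N
    field_simp
    linarith
  rw [Real.div_rpow (by positivity) hN0.le, le_div_iff₀ (by positivity)] at hfactor
  rw [Nat.cast_add_one, hrec, div_le_div_iff₀ (by positivity) (by positivity)]
  nlinarith [multichoose_nonneg (by linarith : 0 ≤ s + 1) N]

lemma multichoose_add_one_le_pow {s : ℝ} (hs : 0 ≤ s) (N : ℕ) :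
    Ring.multichoose (s + 1) N ≤ (s + 1) ^ N := by
  induction N with
  | zero => simp
  | succ N ih =>
    refine le_of_mul_le_mul_left (a := (N : ℝ) + 1) ?_ (by positivity)
    calc (N + 1) * Ring.multichoose (s + 1) (N + 1)
        = (s + 1 + N) * Ring.multichoose (s + 1) N := succ_mul_multichoose_succ _ _
      _ ≤ ((N + 1) * (s + 1)) * (s + 1) ^ N := by
          gcongr ?_ * ?_
          · exact multichoose_nonneg (by linarith) N
          nlinarith [mul_nonneg N.cast_nonneg hs]
      _ = (N + 1) * (s + 1) ^ (N + 1) := by ring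

/-- The left-hand side is antitone in `N`, so it suffices to bound it at one large `N = K`, where it
is at most a constant times `((e / K) ^ β) ^ m`. -/
lemma exists_eventually_multichoose_div_rpow_le {β ε : ℝ} (hβ : 0 < β) (hε : 0 < ε) :
    ∃ C : ℝ, ∀ᶠ N : ℕ in atTop, ∀ m : ℕ,
      Ring.multichoose (β * m + 1) N / (N : ℝ) ^ (β * m) ≤ C * ε ^ m := by
  have hratio : Tendsto (fun K : ℕ => (Real.exp 1 / K) ^ β) atTop (𝓝 0) := by
    simpa [hβ.ne'] using
      (tendsto_const_div_atTop_nhds_zero_nat (Real.exp 1)).rpow_const (.inr hβ.le)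
  obtain ⟨K, hK, hK1⟩ := ((hratio.eventually_le_const hε).and (eventually_ge_atTop 1)).exists
  have hK0 : (0 : ℝ) < K := by exact_mod_cast hK1
  refine ⟨K.factorial * Real.exp 1, ?_⟩
  filter_upwards [eventually_ge_atTop K] with N hN m
  have hs : 0 ≤ β * m := by positivity
  have hpow : (β * m + 1) ^ K ≤ Real.exp (β * m + 1) * K.factorial :=
    (div_le_iff₀ (by positivity)).1 (Real.pow_div_factorial_le_exp _ (by positivity) K)
  calc Ring.multichoose (β * m + 1) N / (N : ℝ) ^ (β * m)
      ≤ Ring.multichoose (β * m + 1) K / (K : ℝ) ^ (β * m) :=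
        antitoneOn_multichoose_div_rpow hs hK1 (hK1.trans hN) hN
    _ ≤ Real.exp (β * m + 1) * K.factorial / (K : ℝ) ^ (β * m) := by
        gcongr
        exact (multichoose_add_one_le_pow hs K).trans hpow
    _ = K.factorial * Real.exp 1 * ((Real.exp 1 / K) ^ β) ^ m := by
        rw [← Real.rpow_mul_natCast (by positivity), Real.div_rpow (by positivity) hK0.le,
          Real.exp_one_rpow, Real.exp_add]
        ring
    _ ≤ K.factorial * Real.exp 1 * ε ^ m := by gcongr

lemma exists_inv_Gamma_le {β ε : ℝ} (hβ : 0 < β) (hε : 0 < ε) :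
    ∃ C : ℝ, ∀ m : ℕ, (Real.Gamma (β * m + 1))⁻¹ ≤ C * ε ^ m := by
  obtain ⟨C, hC⟩ := exists_eventually_multichoose_div_rpow_le hβ hε
  have hs (m : ℕ) : -1 < β * m := neg_one_lt_zero.trans_le (by positivity)
  exact ⟨C, fun m => le_of_tendsto (tendsto_multichoose_div_rpow (hs m)) (hC.mono fun _ h => h m)⟩

/-! ### Taylor expansion -/

section Taylor

variable {𝕜 F : Type*} [NontriviallyNormedField 𝕜] [NormedAddCommGroup F] [NormedSpace 𝕜 F]
  [CompleteSpace F] {f : 𝕜 → F} {p : FormalMultilinearSeries 𝕜 𝕜 F} {x y : 𝕜} {r : ℝ≥0∞}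

lemma exists_hasFPowerSeriesOnBall_iteratedDeriv (h : HasFPowerSeriesOnBall f p x r) (n : ℕ) :
    ∃ q : FormalMultilinearSeries 𝕜 𝕜 F, HasFPowerSeriesOnBall (iteratedDeriv n f) q x r := by
  induction n with
  | zero => exact ⟨p, by rwa [iteratedDeriv_zero]⟩
  | succ n ih =>
    obtain ⟨q, hq⟩ := ih
    rw [iteratedDeriv_succ]
    exact ⟨_, (ContinuousLinearMap.apply 𝕜 F (1 : 𝕜)).comp_hasFPowerSeriesOnBall hq.fderiv⟩

lemma hasSum_iteratedDeriv_add [CharZero 𝕜] (h : HasFPowerSeriesOnBall f p x r)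
    (hy : y ∈ Metric.eball 0 r) (k : ℕ) :
    HasSum (fun j : ℕ => (y ^ j / j.factorial) • iteratedDeriv (k + j) f x)
      (iteratedDeriv k f (x + y)) := by
  obtain ⟨q, hq⟩ := exists_hasFPowerSeriesOnBall_iteratedDeriv h k
  refine (hq.hasSum_iteratedFDeriv hy).congr_fun fun j => ?_
  rw [iteratedFDeriv_apply_eq_iteratedDeriv_mul_prod, smul_smul, prod_const, card_univ,
    Fintype.card_fin, ← div_eq_inv_mul]
  simp only [iteratedDeriv_eq_iterate, ← Function.iterate_add_apply, add_comm j k]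

lemma hasSum_choose_smul_iteratedDeriv_neg [CharZero 𝕜] (h : HasFPowerSeriesOnBall f p 0 ∞)
    (a : 𝕜) (m : ℕ) :
    HasSum (fun k : ℕ => (k.choose m : 𝕜) • (a ^ k / k.factorial) • iteratedDeriv k f (-a))
      ((a ^ m / m.factorial) • iteratedDeriv m f 0) := by
  have hneg : HasFPowerSeriesOnBall f (p.changeOrigin (-a)) (-a) ∞ := by
    simpa using h.changeOrigin (y := -a) ENNReal.coe_lt_top
  have hshift := (hasSum_iteratedDeriv_add hneg (y := a) (by simp) m).const_smul
    (a ^ m / m.factorial : 𝕜)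
  rw [neg_add_cancel] at hshift
  rw [← add_zero ((a ^ m / m.factorial) • _), ← sum_eq_zero (s := range m)
    (f := fun k => (k.choose m : 𝕜) • (a ^ k / k.factorial) • iteratedDeriv k f (-a)),
    ← hasSum_nat_add_iff]
  · refine hshift.congr_fun fun j => ?_
    have hj : (j.factorial : 𝕜) ≠ 0 := Nat.cast_ne_zero.2 j.factorial_ne_zero
    have hm : (m.factorial : 𝕜) ≠ 0 := Nat.cast_ne_zero.2 m.factorial_ne_zero
    have hmj : ((m + j).factorial : 𝕜) ≠ 0 := Nat.cast_ne_zero.2 (m + j).factorial_ne_zero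
    rw [add_comm j m, Nat.cast_add_choose 𝕜, smul_smul, smul_smul, pow_add]
    congr 1
    field_simp
  · intro k hk
    rw [Nat.choose_eq_zero_of_lt (mem_range.1 hk), Nat.cast_zero, zero_smul]

end Taylor

lemma hasFPowerSeriesOnBall_mittagLefflerR {β : ℝ} (hβ : 0 < β) :
    HasFPowerSeriesOnBall (mittagLefflerR β)
      (FormalMultilinearSeries.ofScalars ℝ fun n : ℕ => (Real.Gamma (β * n + 1))⁻¹) 0 ∞ := by
  set p := FormalMultilinearSeries.ofScalars ℝ fun n : ℕ => (Real.Gamma (β * n + 1))⁻¹ with hp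
  have hradius : p.radius = ∞ := by
    refine p.radius_eq_top_of_forall_nnreal_isBigO fun R => ?_
    obtain ⟨C, hC⟩ := exists_inv_Gamma_le hβ (ε := (R + 1 : ℝ)⁻¹) (by positivity)
    refine .of_bound C (.of_forall fun n => ?_)
    have hG : 0 < Real.Gamma (β * n + 1) := Real.Gamma_pos_of_pos (by positivity)
    rw [hp, FormalMultilinearSeries.ofScalars_norm, norm_inv, Real.norm_of_nonneg hG.le,
      Real.norm_of_nonneg (by positivity), norm_one]
    calc (Real.Gamma (β * n + 1))⁻¹ * R ^ n
        ≤ C * (R + 1 : ℝ)⁻¹ ^ n * (R + 1) ^ n := by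
          gcongr
          · exact (inv_pos.2 hG).le.trans (hC n)
          · exact hC n
          · linarith
      _ = C * 1 := by rw [mul_assoc, ← mul_pow, inv_mul_cancel₀ (by positivity), one_pow]
  have hsum : p.sum = mittagLefflerR β := by
    funext x
    exact tsum_congr fun n => by
      rw [hp, FormalMultilinearSeries.ofScalars_apply_eq, smul_eq_mul, div_eq_inv_mul]
  rw [← hsum, ← hradius]
  exact p.hasFPowerSeriesOnBall (by simp [hradius])

lemma iteratedDeriv_mittagLefflerR_zero {β : ℝ} (hβ : 0 < β) (m : ℕ) :
    iteratedDeriv m (mittagLefflerR β) 0 = m.factorial / Real.Gamma (β * m + 1) := by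
  rw [iteratedDeriv_eq_iteratedFDeriv,
    ← (hasFPowerSeriesOnBall_mittagLefflerR hβ).factorial_smul 1,
    FormalMultilinearSeries.ofScalars_apply_eq, nsmul_eq_mul, smul_eq_mul, one_pow, mul_one,
    div_eq_mul_inv]

/-! ### Complete monotonicity -/

lemma tendsto_tsum_choose_mul_multichoose {β : ℝ} (hβ : 0 < β) (x : ℝ) (k : ℕ) :
    Tendsto (fun N : ℕ => ∑' j : ℕ, ((k + j).choose k : ℝ) * x ^ j *
        (Ring.multichoose (β * (k + j : ℕ) + 1) N / (N : ℝ) ^ (β * (k + j : ℕ)))) atTop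
      (𝓝 (∑' j : ℕ, ((k + j).choose k : ℝ) * x ^ j *
        (Real.Gamma (β * (k + j : ℕ) + 1))⁻¹)) := by
  set ε : ℝ := (4 * (|x| + 1))⁻¹ with hε
  have hratio : 2 * |x| * ε ≤ 1 / 2 := by
    rw [hε, ← div_eq_mul_inv, div_le_iff₀ (by positivity)]
    linarith
  obtain ⟨C, hC⟩ := exists_eventually_multichoose_div_rpow_le hβ (ε := ε) (by positivity)
  refine tendsto_tsum_of_dominated_convergence
    (summable_geometric_two.mul_left (C * (2 * ε) ^ k)) (fun j => ?_) ?_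
  · exact (tendsto_multichoose_div_rpow (neg_one_lt_zero.trans_le (by positivity))).const_mul _
  · filter_upwards [hC] with N hN j
    have hchoose : ((k + j).choose k : ℝ) ≤ 2 ^ (k + j) := by
      exact_mod_cast Nat.choose_le_two_pow _ _
    have hcoeff := multichoose_nonneg (s := β * (k + j : ℕ) + 1) (by positivity) N
    have hC0 : 0 ≤ C := nonneg_of_mul_nonneg_left
      ((by positivity : (0 : ℝ) ≤ _ / _).trans (hN (k + j))) (by positivity)
    rw [norm_mul, norm_mul, norm_pow, Real.norm_natCast, Real.norm_eq_abs x,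
      Real.norm_of_nonneg (by positivity)]
    calc ((k + j).choose k : ℝ) * |x| ^ j *
          (Ring.multichoose (β * (k + j : ℕ) + 1) N / (N : ℝ) ^ (β * (k + j : ℕ)))
        ≤ 2 ^ (k + j) * |x| ^ j * (C * ε ^ (k + j)) := by gcongr; exact hN (k + j)
      _ = C * (2 * ε) ^ k * (2 * |x| * ε) ^ j := by ring
      _ ≤ C * (2 * ε) ^ k * (1 / 2) ^ j := by gcongr

lemma tsum_choose_mul_inv_Gamma_nonneg {β x : ℝ} (h0 : 0 < β) (h1 : β ≤ 1) (hx : 0 ≤ x) (k : ℕ) :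
    0 ≤ ∑' j : ℕ, ((k + j).choose k : ℝ) * (-x) ^ j * (Real.Gamma (β * (k + j : ℕ) + 1))⁻¹ := by
  refine ge_of_tendsto (tendsto_tsum_choose_mul_multichoose h0 (-x) k) ?_
  have hμ : Tendsto (fun N : ℕ => x / (N : ℝ) ^ β) atTop (𝓝 0) :=
    tendsto_const_nhds.div_atTop ((tendsto_rpow_atTop h0).comp tendsto_natCast_atTop_atTop)
  filter_upwards [hμ.eventually_lt_const one_pos, eventually_gt_atTop 0] with N hμN hN
  have hN0 : (0 : ℝ) < N := by exact_mod_cast hN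
  have hpow (j : ℕ) : (N : ℝ) ^ (β * (k + j : ℕ)) = (N : ℝ) ^ (β * k) * ((N : ℝ) ^ β) ^ j := by
    rw [← Real.rpow_mul_natCast hN0.le, ← Real.rpow_add hN0, ← mul_add, Nat.cast_add]
  have hscale (j : ℕ) : ((k + j).choose k : ℝ) * (-x) ^ j *
        (Ring.multichoose (β * (k + j : ℕ) + 1) N / (N : ℝ) ^ (β * (k + j : ℕ)))
      = ((N : ℝ) ^ (β * k))⁻¹ * (((k + j).choose k : ℝ) * (-(x / (N : ℝ) ^ β)) ^ j
        * Ring.multichoose (β * (k + j : ℕ) + 1) N) := by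
    rw [hpow, ← neg_div, div_pow]
    field_simp
  simp_rw [hscale, tsum_mul_left]
  exact mul_nonneg (by positivity)
    (tsum_choose_mul_multichoose_nonneg h0.le h1 (by positivity) hμN k N)

lemma iteratedDeriv_mittagLefflerR_eq_tsum {β : ℝ} (hβ : 0 < β) (x : ℝ) (k : ℕ) :
    iteratedDeriv k (mittagLefflerR β) x = k.factorial *
      ∑' j : ℕ, ((k + j).choose k : ℝ) * x ^ j * (Real.Gamma (β * (k + j : ℕ) + 1))⁻¹ := by
  have htaylor := hasSum_iteratedDeriv_add (hasFPowerSeriesOnBall_mittagLefflerR hβ)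
    (y := x) (by simp) k
  rw [zero_add] at htaylor
  rw [← htaylor.tsum_eq, ← tsum_mul_left]
  refine tsum_congr fun j => ?_
  rw [iteratedDeriv_mittagLefflerR_zero hβ, Nat.cast_add_choose ℝ, smul_eq_mul]
  field_simp

lemma iteratedDeriv_mittagLefflerR_neg_nonneg {β x : ℝ} (h0 : 0 < β) (h1 : β ≤ 1) (hx : 0 ≤ x)
    (k : ℕ) : 0 ≤ iteratedDeriv k (mittagLefflerR β) (-x) := by
  rw [iteratedDeriv_mittagLefflerR_eq_tsum h0]
  exact mul_nonneg (by positivity) (tsum_choose_mul_inv_Gamma_nonneg h0 h1 hx k)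

/-! ### Moments -/

lemma hasSum_choose_mul_iteratedDeriv_mittagLefflerR {β : ℝ} (hβ : 0 < β) (lam : ℝ) (m : ℕ) :
    HasSum (fun k : ℕ => (k.choose m : ℝ) *
      (lam ^ k / k.factorial * iteratedDeriv k (mittagLefflerR β) (-lam)))
      (lam ^ m / Real.Gamma (β * m + 1)) := by
  have h := hasSum_choose_smul_iteratedDeriv_neg (hasFPowerSeriesOnBall_mittagLefflerR hβ) lam m
  have hm : (m.factorial : ℝ) ≠ 0 := by positivity
  simpa only [smul_eq_mul, iteratedDeriv_mittagLefflerR_zero hβ, div_mul_div_cancel₀ hm] using h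

lemma factorial_mul_stirlingSnd (n m : ℕ) :
    (m.factorial : ℝ) * stirlingSnd n m = iteratedDeriv n (fun x => (Real.exp x - 1) ^ m) 0 :=
  mul_div_cancel₀ _ (Nat.cast_ne_zero.2 m.factorial_ne_zero)

lemma stirlingSnd_eq_zero_of_lt {n m : ℕ} (h : n < m) : stirlingSnd n m = 0 := by
  have hexp : AnalyticAt ℝ (fun x : ℝ => Real.exp x - 1) 0 := by fun_prop
  have horder : (m : ℕ∞) ≤ analyticOrderAt ((fun x : ℝ => Real.exp x - 1) ^ m) 0 := by
    rw [analyticOrderAt_pow hexp, nsmul_eq_mul]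
    exact le_mul_of_one_le_right'
      (Order.one_le_iff_ne_zero.2 (by simp [hexp.analyticOrderAt_eq_zero]))
  have hderiv := (natCast_le_analyticOrderAt_iff_iteratedDeriv_eq_zero (hexp.pow m)).1 horder n h
  exact div_eq_zero_iff.2 (.inl hderiv)

lemma exp_natCast_mul_eq_sum_choose (k : ℕ) (x : ℝ) :
    Real.exp (k * x) = ∑ m ∈ range (k + 1), (k.choose m : ℝ) * (Real.exp x - 1) ^ m := by
  rw [Real.exp_nat_mul]
  conv_lhs => rw [← sub_add_cancel (Real.exp x) 1, add_pow]
  exact sum_congr rfl fun m _ => by rw [one_pow, mul_one, mul_comm]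

lemma pow_eq_sum_stirlingSnd (k n : ℕ) :
    (k : ℝ) ^ n = ∑ m ∈ range (n + 1), (m.factorial : ℝ) * stirlingSnd n m * (k.choose m : ℝ) := by
  calc (k : ℝ) ^ n = iteratedDeriv n (fun x : ℝ => Real.exp (k * x)) 0 := by
        simp [iteratedDeriv_exp_const_mul]
    _ = ∑ m ∈ range (k + 1), (m.factorial : ℝ) * stirlingSnd n m * (k.choose m : ℝ) := by
        simp only [exp_natCast_mul_eq_sum_choose]
        rw [iteratedDeriv_fun_sum fun m _ => by fun_prop]
        refine sum_congr rfl fun m _ => ?_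
        rw [iteratedDeriv_const_mul_field, ← factorial_mul_stirlingSnd, mul_comm]
    _ = ∑ m ∈ range (n + 1), (m.factorial : ℝ) * stirlingSnd n m * (k.choose m : ℝ) := by
        refine sum_congr_of_eq_on_inter (fun m _ hm => ?_) (fun m _ hm => ?_) fun _ _ _ => rfl
        · rw [stirlingSnd_eq_zero_of_lt (by simpa using hm), mul_zero, zero_mul]
        · rw [Nat.choose_eq_zero_of_lt (by simpa using hm), Nat.cast_zero, mul_zero]

section WeightedDirac

variable {ι Ω : Type*} [Countable ι] [MeasurableSpace Ω] [MeasurableSingletonClass Ω]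

lemma integrable_and_integral_eq_of_hasSum {w : ι → ℝ} (hw : ∀ i, 0 ≤ w i) {x : ι → Ω} {f : Ω → ℝ}
    {a : ℝ} (h : HasSum (fun i => w i * f (x i)) a) :
    Integrable f (Measure.sum fun i => ENNReal.ofReal (w i) • Measure.dirac (x i)) ∧
      ∫ ω, f ω ∂(Measure.sum fun i => ENNReal.ofReal (w i) • Measure.dirac (x i)) = a := by
  have htop (i : ι) : ENNReal.ofReal (w i) ≠ ∞ := ENNReal.ofReal_ne_top
  have habs : Summable fun i => (ENNReal.ofReal (w i)).toReal * ‖f (x i)‖ := by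
    refine h.summable.abs.congr fun i => ?_
    rw [ENNReal.toReal_ofReal (hw i), abs_mul, abs_of_nonneg (hw i), Real.norm_eq_abs]
  refine ⟨integrable_sum_dirac htop habs, (hasSum_integral_sum_dirac htop habs).unique ?_⟩
  refine h.congr_fun fun i => ?_
  rw [ENNReal.toReal_ofReal (hw i), smul_eq_mul]

end WeightedDirac

theorem stmt2 (lam β : ℝ) (hlam : 0 < lam) (hβ0 : 0 < β) (hβ1 : β ≤ 1) (n : ℕ) :
    Integrable (fun x : ℝ => x ^ n) (fracPoisson lam β) ∧
    (∫ x, x ^ n ∂(fracPoisson lam β)) = ∑ m ∈ Finset.range (n + 1),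
      (m.factorial : ℝ) / Real.Gamma (m * β + 1) * stirlingSnd n m * lam ^ m := by
  refine integrable_and_integral_eq_of_hasSum (fun k => mul_nonneg (by positivity)
    (iteratedDeriv_mittagLefflerR_neg_nonneg hβ0 hβ1 hlam.le k)) ?_
  have hmoment := hasSum_sum fun m (_ : m ∈ range (n + 1)) =>
    (hasSum_choose_mul_iteratedDeriv_mittagLefflerR hβ0 lam m).mul_left
      (m.factorial * stirlingSnd n m)
  have hvalue : ∑ m ∈ range (n + 1), m.factorial * stirlingSnd n m *
        (lam ^ m / Real.Gamma (β * m + 1))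
      = ∑ m ∈ range (n + 1),
        (m.factorial : ℝ) / Real.Gamma (m * β + 1) * stirlingSnd n m * lam ^ m :=
    sum_congr rfl fun m _ => by rw [mul_comm β]; ring
  rw [hvalue] at hmoment
  refine hmoment.congr_fun fun k => ?_
  rw [pow_eq_sum_stirlingSnd, mul_sum]
  exact sum_congr rfl fun m _ => by ring
end
end

section
/- Let λ > 0 and β ∈ (0,1]. For every n ∈ ℕ₀ and every x ∈ ℝ, C_n^{λ,β}(x) = ∑_{m=0}^n s(n,m) A_m^{λ,β}(x), where s(n,m) are the Stirling numbers of the first kind. -/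
open MeasureTheory Finset
open scoped ENNReal NNReal

noncomputable section

/-!
Near `0` the generating function of the generalized Appell polynomials is `g (log (1 + z))`, where
`g w = exp (w x) / E_β (λ (exp w - 1))` generates the Appell polynomials. Taylor's formula writes
`g w = ∑_{m ≤ n} A_m(x) wᵐ / m! + w ^ (n + 1) R(w)` with `R` analytic. After the substitution
`w = log (1 + z)` the remainder vanishes to order `n + 1` at `0`, so only the `n`-th derivatives of
`log (1 + z) ^ m / m!`, which are the Stirling numbers `s(n, m)`, contribute to `C_n(x)`.
-/

open scoped Topology

section IteratedDeriv

variable {𝕜 E : Type*} [NontriviallyNormedField 𝕜] [CharZero 𝕜] [NormedAddCommGroup E]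
  [NormedSpace 𝕜 E] [CompleteSpace E]

lemma iteratedDeriv_pow_smul_eq_zero {f : 𝕜 → 𝕜} {R : 𝕜 → E} {a : 𝕜} (hf : AnalyticAt 𝕜 f a)
    (hfa : f a = 0) (hR : AnalyticAt 𝕜 R a) {m n : ℕ} (hnm : n < m) :
    iteratedDeriv n (fun z => f z ^ m • R z) a = 0 := by
  have hpow : AnalyticAt 𝕜 (f ^ m) a := hf.pow m
  have horder : (m : ℕ∞) ≤ analyticOrderAt (f ^ m • R) a := by
    rw [analyticOrderAt_smul hpow hR, analyticOrderAt_pow hf, nsmul_eq_mul]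
    have hone : 1 ≤ analyticOrderAt f a :=
      Order.one_le_iff_ne_zero.mpr (hf.analyticOrderAt_ne_zero.mpr hfa)
    exact (le_mul_of_one_le_right' hone).trans le_self_add
  exact (natCast_le_analyticOrderAt_iff_iteratedDeriv_eq_zero (hpow.smul hR)).mp horder n hnm

lemma exists_eq_sum_iteratedDeriv_add_pow_smul {g : 𝕜 → E} {b : 𝕜} (hg : AnalyticAt 𝕜 g b)
    (n : ℕ) :
    ∃ R : 𝕜 → E, AnalyticAt 𝕜 R b ∧ ∀ w, g w =
      (∑ m ∈ range n, ((w - b) ^ m / m.factorial) • iteratedDeriv m g b) + (w - b) ^ n • R w := by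
  have hshift : AnalyticAt 𝕜 (fun w => g (b + w)) 0 :=
    AnalyticAt.fun_comp (by simpa using hg) (by fun_prop)
  obtain ⟨R, hR, hgR⟩ := hshift.exists_eq_sum_add_pow_mul n
  refine ⟨fun w => R (w - b), AnalyticAt.fun_comp (by simpa using hR) (by fun_prop), fun w => ?_⟩
  simpa [iteratedDeriv_comp_const_add] using hgR (w - b)

lemma iteratedDeriv_comp_eq_sum [CompleteSpace 𝕜] {g : 𝕜 → E} {f : 𝕜 → 𝕜} {a : 𝕜}
    (hg : AnalyticAt 𝕜 g (f a)) (hf : AnalyticAt 𝕜 f a) (n : ℕ) :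
    iteratedDeriv n (fun z => g (f z)) a = ∑ m ∈ range (n + 1),
      (iteratedDeriv n (fun z => (f z - f a) ^ m) a / m.factorial) • iteratedDeriv m g (f a) := by
  obtain ⟨R, hR, htaylor⟩ := exists_eq_sum_iteratedDeriv_add_pow_smul hg (n + 1)
  have hsub : AnalyticAt 𝕜 (fun z => f z - f a) a := hf.sub analyticAt_const
  have hRf : AnalyticAt 𝕜 (fun z => R (f z)) a := hR.fun_comp hf
  have hcoeff (m : ℕ) : AnalyticAt 𝕜 (fun z => (f z - f a) ^ m / m.factorial) a :=
    (hsub.pow m).div_const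
  have hterm (m : ℕ) :
      AnalyticAt 𝕜 (fun z => ((f z - f a) ^ m / m.factorial) • iteratedDeriv m g (f a)) a :=
    (hcoeff m).smul analyticAt_const
  have hrem : AnalyticAt 𝕜 (fun z => (f z - f a) ^ (n + 1) • R (f z)) a :=
    (hsub.pow (n + 1)).smul hRf
  calc iteratedDeriv n (fun z => g (f z)) a
      = iteratedDeriv n (fun z =>
          (∑ m ∈ range (n + 1), ((f z - f a) ^ m / m.factorial) • iteratedDeriv m g (f a)) +
            (f z - f a) ^ (n + 1) • R (f z)) a := by simp only [← htaylor]
    _ = ∑ m ∈ range (n + 1), iteratedDeriv n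
          (fun z => ((f z - f a) ^ m / m.factorial) • iteratedDeriv m g (f a)) a := by
        rw [iteratedDeriv_fun_add (analyticAt_fun_sum _ fun m _ => hterm m).contDiffAt
            hrem.contDiffAt,
          iteratedDeriv_pow_smul_eq_zero hsub (sub_self _) hRf n.lt_succ_self, add_zero,
          iteratedDeriv_fun_sum fun m _ => (hterm m).contDiffAt]
    _ = _ := by
        refine sum_congr rfl fun m _ => ?_
        rw [iteratedDeriv_smul_const (hcoeff m).contDiffAt, iteratedDeriv_div_const]

end IteratedDeriv

lemma ofReal_deriv_of_eventually_ofReal_eq {f : ℝ → ℝ} {F : ℂ → ℂ} {a : ℝ}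
    (hF : DifferentiableAt ℂ F a) (hfF : ∀ᶠ t : ℝ in 𝓝 a, (f t : ℂ) = F t) :
    ((deriv f a : ℝ) : ℂ) = deriv F a := by
  have hFderiv : HasDerivAt F (deriv F a) a := hF.hasDerivAt
  have hfderiv : HasDerivAt f (deriv F a).re a :=
    hFderiv.real_of_complex.congr_of_eventuallyEq
      (hfF.mono fun t ht => by simp only [← ht, Complex.ofReal_re])
  rw [hfderiv.deriv]
  exact hfderiv.ofReal_comp.unique (hFderiv.comp_ofReal.congr_of_eventuallyEq hfF)

lemma ofReal_iteratedDeriv_of_eventually_ofReal_eq {f : ℝ → ℝ} {F : ℂ → ℂ} {a : ℝ}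
    (hF : AnalyticAt ℂ F a) (hfF : ∀ᶠ t : ℝ in 𝓝 a, (f t : ℂ) = F t) (n : ℕ) :
    ((iteratedDeriv n f a : ℝ) : ℂ) = iteratedDeriv n F a := by
  induction n generalizing f F with
  | zero => simpa using hfF.self_of_nhds
  | succ n ih =>
    rw [iteratedDeriv_succ', iteratedDeriv_succ']
    have hFan : ∀ᶠ t : ℝ in 𝓝 a, AnalyticAt ℂ F t :=
      Complex.continuous_ofReal.continuousAt.eventually hF.eventually_analyticAt
    refine ih hF.deriv ?_
    filter_upwards [hfF.eventually_nhds, hFan] with t hfFt hFt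
    exact ofReal_deriv_of_eventually_ofReal_eq hFt.differentiableAt hfFt

lemma analyticAt_log_one_add : AnalyticAt ℂ (fun z : ℂ => Complex.log (1 + z)) 0 :=
  (analyticAt_const.add analyticAt_id).clog (by simp)

lemma ofReal_stirlingFst (n m : ℕ) :
    (stirlingFst n m : ℂ) =
      iteratedDeriv n (fun z : ℂ => Complex.log (1 + z) ^ m) 0 / m.factorial := by
  have hlog : ∀ᶠ t : ℝ in 𝓝 0, ((Real.log (1 + t) ^ m : ℝ) : ℂ) = Complex.log (1 + t) ^ m := by
    filter_upwards [lt_mem_nhds (show (-1 : ℝ) < 0 by simp)] with t ht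
    rw [Complex.ofReal_pow, Complex.ofReal_log (by linarith), Complex.ofReal_add,
      Complex.ofReal_one]
  have hderiv := ofReal_iteratedDeriv_of_eventually_ofReal_eq
    (F := fun z : ℂ => Complex.log (1 + z) ^ m)
    (by simpa using analyticAt_log_one_add.fun_pow m) hlog n
  rw [stirlingFst, Complex.ofReal_div, Complex.ofReal_natCast, hderiv, Complex.ofReal_zero]

lemma iteratedDeriv_comp_log_one_add {E : Type*} [NormedAddCommGroup E] [NormedSpace ℂ E]
    [CompleteSpace E] {g : ℂ → E} (hg : AnalyticAt ℂ g 0) (n : ℕ) :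
    iteratedDeriv n (fun z => g (Complex.log (1 + z))) 0 =
      ∑ m ∈ range (n + 1), (stirlingFst n m : ℂ) • iteratedDeriv m g 0 := by
  have hzero : Complex.log (1 + 0) = 0 := by simp
  simpa only [hzero, sub_zero, ← ofReal_stirlingFst] using
    iteratedDeriv_comp_eq_sum (by rwa [hzero]) analyticAt_log_one_add n

lemma exists_forall_norm_inv_Gamma_ofReal_le :
    ∃ C : ℝ, ∀ x : ℝ, 0 < x → ‖(Complex.Gamma x)⁻¹‖ ≤ C := by
  obtain ⟨x₀, hx₀, hmin⟩ := Real.exists_isMinOn_Gamma_Ioi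
  have hpos : 0 < Real.Gamma x₀ := Real.Gamma_pos_of_pos (zero_lt_one.trans hx₀.1)
  refine ⟨(Real.Gamma x₀)⁻¹, fun x hx => ?_⟩
  rw [Complex.Gamma_ofReal, norm_inv, Complex.norm_real,
    Real.norm_of_nonneg (Real.Gamma_pos_of_pos hx).le]
  exact inv_anti₀ hpos (hmin hx)

lemma hasFPowerSeriesOnBall_mittagLeffler {β : ℝ} (hβ : 0 ≤ β) :
    HasFPowerSeriesOnBall (mittagLeffler β)
      (.ofScalars ℂ fun n : ℕ => (Complex.Gamma ((β * n + 1 : ℝ) : ℂ))⁻¹) 0 1 := by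
  obtain ⟨C, hC⟩ := exists_forall_norm_inv_Gamma_ofReal_le
  set p : FormalMultilinearSeries ℂ ℂ ℂ :=
    .ofScalars ℂ fun n : ℕ => (Complex.Gamma ((β * n + 1 : ℝ) : ℂ))⁻¹
  have hradius : 1 ≤ p.radius := by
    refine mod_cast p.le_radius_of_bound (r := 1) C fun n => ?_
    simpa [p, FormalMultilinearSeries.ofScalars_norm] using hC (β * n + 1) (by positivity)
  have hsum : p.sum = mittagLeffler β := by
    funext z
    simp only [p, FormalMultilinearSeries.sum, FormalMultilinearSeries.ofScalars_apply_eq,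
      smul_eq_mul, mittagLeffler, div_eq_inv_mul]
  rw [← hsum]
  exact (p.hasFPowerSeriesOnBall (one_pos.trans_le hradius)).mono one_pos hradius

lemma mittagLeffler_zero (β : ℝ) : mittagLeffler β 0 = 1 := by
  rw [mittagLeffler, tsum_eq_single 0 fun n hn => by simp [hn]]
  simp

/-- The exponential generating function `w ↦ e^{wx} / E_β(λ(eʷ - 1))` of the Appell polynomials
`A_n^{λ,β}(x)`. -/
def appellGenFun (lam β : ℝ) (x w : ℂ) : ℂ :=
  Complex.exp (w * x) / mittagLeffler β (lam * (Complex.exp w - 1))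

lemma analyticAt_appellGenFun (lam : ℝ) {β : ℝ} (hβ : 0 ≤ β) (x : ℂ) :
    AnalyticAt ℂ (appellGenFun lam β x) 0 := by
  have hE : AnalyticAt ℂ (mittagLeffler β) 0 := (hasFPowerSeriesOnBall_mittagLeffler hβ).analyticAt
  have hdenom : AnalyticAt ℂ (fun w => mittagLeffler β (lam * (Complex.exp w - 1))) 0 :=
    AnalyticAt.fun_comp (by simpa using hE) (by fun_prop)
  exact AnalyticAt.fun_div (by fun_prop) hdenom (by simp [mittagLeffler_zero])

lemma appellGenFun_log (lam β : ℝ) (x : ℂ) {z : ℂ} (hz : 1 + z ≠ 0) :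
    appellGenFun lam β x (Complex.log (1 + z)) =
      Complex.exp (x * Complex.log (1 + z)) / mittagLeffler β (lam * z) := by
  rw [appellGenFun, Complex.exp_log hz, add_sub_cancel_left, mul_comm x]

lemma genAppell_eq_iteratedDeriv_appellGenFun_log (lam β : ℝ) (n : ℕ) (x : ℂ) :
    genAppell lam β n x =
      iteratedDeriv n (fun z => appellGenFun lam β x (Complex.log (1 + z))) 0 := by
  have hne : ∀ᶠ z : ℂ in 𝓝 0, 1 + z ≠ 0 :=
    ContinuousAt.eventually_ne (by fun_prop) (by simp)
  exact Filter.EventuallyEq.iteratedDeriv_eq n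
    (hne.mono fun z hz => (appellGenFun_log lam β x hz).symm)

theorem stmt4_general (lam : ℝ) {β : ℝ} (hβ : 0 ≤ β) (n : ℕ) (x : ℂ) :
    genAppell lam β n x =
      ∑ m ∈ range (n + 1), (stirlingFst n m : ℂ) * appell lam β m x := by
  rw [genAppell_eq_iteratedDeriv_appellGenFun_log]
  exact iteratedDeriv_comp_log_one_add (analyticAt_appellGenFun lam hβ x) n

theorem stmt4 (lam β : ℝ) (hlam : 0 < lam) (hβ0 : 0 < β) (hβ1 : β ≤ 1) (n : ℕ) (x : ℝ) :
    genAppell lam β n x =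
      ∑ m ∈ Finset.range (n + 1), (stirlingFst n m : ℂ) * appell lam β m x := by
  exact stmt4_general lam hβ0.le n x
end
end
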